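/- arXiv:2209.08043 — 8 statements merged into one kernel-verified Lean document; each statement's English description precedes it below -/
import Mathlib

section
/- Let F be a field with char F ≠ 2 and let α, β ∈ F be such that 1, 0, α, β are pairwise distinct, with α ≠ 2β and α ≠ 4β. Then every 2-generated axial algebra of Monster type (α, β) over F has dimension at most 8 as an F-vector space. -/
/- STATEMENT 0: Rehren's dimension bound for 2-generated axial algebras of
Monster type (α, β) with α ≠ 2β, 4β. -/

variable (F : Type*) [Field F] (A : Type*) [NonUnitalNonAssocCommRing A]
  [Module F A] [SMulCommClass F A A] [IsScalarTower F A A]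

/-- The `μ`-eigenspace of the left multiplication operator by `a`. -/
def axEig (a : A) (μ : F) : Submodule F A where
  carrier := {x | a * x = μ • x}
  zero_mem' := by simp
  add_mem' := fun hx hy => by
    simp only [Set.mem_setOf_eq] at *
    rw [mul_add, hx, hy, smul_add]
  smul_mem' := fun c x hx => by
    simp only [Set.mem_setOf_eq] at *
    rw [mul_smul_comm, hx, smul_smul, smul_smul, mul_comm]

/-- `a` is a primitive axis of Monster type `(α, β)`: an idempotent such that the algebra
is the internal direct sum of the eigenspaces `A_1 ⊕ A_0 ⊕ A_α ⊕ A_β` of ad(a), with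
`A_1 = F·a`, and the eigenspaces multiply according to the fusion law `M(α, β)`. -/
structure IsPrimitiveMonsterAxis (α β : F) (a : A) : Prop where
  idem : a * a = a
  decomp : DirectSum.IsInternal
    (![axEig F A a 1, axEig F A a 0, axEig F A a α, axEig F A a β] : Fin 4 → Submodule F A)
  primitive : axEig F A a 1 = Submodule.span F {a}
  f11 : ∀ x ∈ axEig F A a 1, ∀ y ∈ axEig F A a 1, x * y ∈ axEig F A a 1
  f10 : ∀ x ∈ axEig F A a 1, ∀ y ∈ axEig F A a 0, x * y = 0
  f1a : ∀ x ∈ axEig F A a 1, ∀ y ∈ axEig F A a α, x * y ∈ axEig F A a α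
  f1b : ∀ x ∈ axEig F A a 1, ∀ y ∈ axEig F A a β, x * y ∈ axEig F A a β
  f00 : ∀ x ∈ axEig F A a 0, ∀ y ∈ axEig F A a 0, x * y ∈ axEig F A a 0
  f0a : ∀ x ∈ axEig F A a 0, ∀ y ∈ axEig F A a α, x * y ∈ axEig F A a α
  f0b : ∀ x ∈ axEig F A a 0, ∀ y ∈ axEig F A a β, x * y ∈ axEig F A a β
  faa : ∀ x ∈ axEig F A a α, ∀ y ∈ axEig F A a α, x * y ∈ axEig F A a 1 ⊔ axEig F A a 0
  fab : ∀ x ∈ axEig F A a α, ∀ y ∈ axEig F A a β, x * y ∈ axEig F A a β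
  fbb : ∀ x ∈ axEig F A a β, ∀ y ∈ axEig F A a β,
    x * y ∈ axEig F A a 1 ⊔ axEig F A a 0 ⊔ axEig F A a α

/-- `A` is a 2-generated axial algebra of Monster type `(α, β)`:
it is generated as an `F`-algebra by two primitive axes of Monster type `(α, β)`. -/
def IsTwoGeneratedMonsterType (α β : F) : Prop :=
  ∃ a b : A, IsPrimitiveMonsterAxis F A α β a ∧ IsPrimitiveMonsterAxis F A α β b ∧
    NonUnitalAlgebra.adjoin F ({a, b} : Set A) = ⊤

/-!
Write `τ` for the Miyamoto involution of `a`, which negates `A_β` and fixes the even part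
`A_1 ⊕ A_0 ⊕ A_α`, and put `s(x, y) = x y - β (x + y)`. If `u` and `v` are the components of `b`
in `A_0` and `A_α`, then `a`, `u`, `v` span the same space as `a`, `b + τ b`, `s(a, b)` (when
`α ≠ 0`). So products of `u` and `v` can be computed in two ways: from the fusion law
(`a (u u) = 0`, `a (u v) = α u v`, `a (v v) ∈ F a`), and from `b` and `s(a, b)`. Comparing the two
expresses `a s(b, τ b)`, when `α ≠ 2β`, through the elements spanning `rehrenSpan`, and relates
`s(a, b) ^ 2` to the sum of two further axes of the orbit with coefficient `β (α - β)² (α - 4β)`.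
Exchanging `a` and `b` and eliminating `s(a, b) ^ 2` shows, when `α ≠ 4β`, that the span is
symmetric in `a` and `b`; it is therefore stable under multiplication by all its axes, and a second
use of the fusion law makes it a subalgebra.
-/

section

variable {F A} {α β : F} {a b : A}

section Multipliers

/-- The space of those `x` for which multiplication by `x` maps the subspace `W` to itself. -/
def multipliers (W : Submodule F A) : Submodule F A where
  carrier := {x | ∀ y ∈ W, x * y ∈ W}
  zero_mem' y _ := by rw [zero_mul]; exact W.zero_mem
  add_mem' hx hx' y hy := by rw [add_mul]; exact W.add_mem (hx y hy) (hx' y hy)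
  smul_mem' c x hx y hy := by rw [smul_mul_assoc]; exact W.smul_mem c (hx y hy)

omit [SMulCommClass F A A] in
theorem map_mem_multipliers {W : Submodule F A} {φ : A →ₙₐ[F] A} (hφ : ∀ x, φ (φ x) = x)
    (hW : ∀ x ∈ W, φ x ∈ W) {x : A} (hx : x ∈ multipliers W) : φ x ∈ multipliers W := by
  intro y hy
  have h := hW _ (hx _ (hW y hy))
  rwa [map_mul, hφ] at h

end Multipliers

section GradingInvolution

variable {p q : Submodule F A}

omit [SMulCommClass F A A] [IsScalarTower F A A] in
theorem ofIsCompl_subtype_neg_subtype_add (h : IsCompl p q) {x y : A} (hx : x ∈ p) (hy : y ∈ q) :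
    LinearMap.ofIsCompl h p.subtype (-q.subtype) (x + y) = x - y := by
  have hx' : LinearMap.ofIsCompl h p.subtype (-q.subtype) x = x :=
    LinearMap.ofIsCompl_apply_left h ⟨x, hx⟩
  have hy' : LinearMap.ofIsCompl h p.subtype (-q.subtype) y = -y :=
    LinearMap.ofIsCompl_apply_right h ⟨y, hy⟩
  rw [map_add, hx', hy', sub_eq_add_neg]

/-- The involution of a `ℤ/2`-graded commutative algebra with even part `p` and odd part `q`: the
algebra endomorphism which is the identity on `p` and minus the identity on `q`. -/
noncomputable def gradingInvolution (h : IsCompl p q)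
    (hpp : ∀ x ∈ p, ∀ y ∈ p, x * y ∈ p) (hpq : ∀ x ∈ p, ∀ y ∈ q, x * y ∈ q)
    (hqq : ∀ x ∈ q, ∀ y ∈ q, x * y ∈ p) : A →ₙₐ[F] A :=
  { LinearMap.ofIsCompl h p.subtype (-q.subtype) with
    map_zero' := LinearMap.map_zero _
    map_mul' := fun x y => by
      obtain ⟨x₀, hx₀, x₁, hx₁, rfl⟩ :=
        Submodule.mem_sup.1 (h.sup_eq_top.ge (Submodule.mem_top (x := x)))
      obtain ⟨y₀, hy₀, y₁, hy₁, rfl⟩ :=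
        Submodule.mem_sup.1 (h.sup_eq_top.ge (Submodule.mem_top (x := y)))
      have e : (x₀ + x₁) * (y₀ + y₁) = x₀ * y₀ + x₁ * y₁ + (x₀ * y₁ + y₀ * x₁) := by
        rw [mul_add, add_mul, add_mul, mul_comm x₁ y₀]
        abel
      change LinearMap.ofIsCompl h p.subtype (-q.subtype) _ =
        LinearMap.ofIsCompl h p.subtype (-q.subtype) _ *
          LinearMap.ofIsCompl h p.subtype (-q.subtype) _
      rw [e, ofIsCompl_subtype_neg_subtype_add h
          (add_mem (hpp x₀ hx₀ y₀ hy₀) (hqq x₁ hx₁ y₁ hy₁))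
          (add_mem (hpq x₀ hx₀ y₁ hy₁) (hpq y₀ hy₀ x₁ hx₁)),
        ofIsCompl_subtype_neg_subtype_add h hx₀ hx₁, ofIsCompl_subtype_neg_subtype_add h hy₀ hy₁,
        mul_sub, sub_mul, sub_mul, mul_comm x₁ y₀]
      abel }

omit [SMulCommClass F A A] [IsScalarTower F A A] in
theorem gradingInvolution_add (h : IsCompl p q) (hpp hpq hqq) {x y : A} (hx : x ∈ p)
    (hy : y ∈ q) : gradingInvolution h hpp hpq hqq (x + y) = x - y :=
  ofIsCompl_subtype_neg_subtype_add h hx hy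

end GradingInvolution

section Eigenspaces

omit [IsScalarTower F A A]

theorem mem_axEig {μ : F} {x : A} : x ∈ axEig F A a μ ↔ a * x = μ • x := Iff.rfl

theorem mem_axEig_zero {x : A} : x ∈ axEig F A a 0 ↔ a * x = 0 := by
  rw [mem_axEig, zero_smul]

/-- The even part `A_1 ⊕ A_0 ⊕ A_α` of the grading of `A` by `ℤ/2` that an axis `a` defines; the
odd part is `A_β`. -/
def evenPart (α : F) (a : A) : Submodule F A :=
  axEig F A a 1 ⊔ axEig F A a 0 ⊔ axEig F A a α

end Eigenspaces

/-- The product of `a` and `b`, corrected so that it lies in the even part of `b` whenever `b` is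
an axis, and in that of `a` whenever `a` is; `s_{a,b}` in the literature. -/
def sProd (β : F) (a b : A) : A := a * b - β • (a + b)

omit [SMulCommClass F A A] [IsScalarTower F A A] in
theorem sProd_comm (a b : A) : sProd β a b = sProd β b a := by
  rw [sProd, sProd, mul_comm, add_comm]

omit [SMulCommClass F A A] [IsScalarTower F A A] in
theorem mul_eq_sProd_add (β : F) (a b : A) : a * b = sProd β a b + β • (a + b) := by
  rw [sProd, sub_add_cancel]

namespace IsPrimitiveMonsterAxis

section Eigenspaces

variable (ha : IsPrimitiveMonsterAxis F A α β a)

include ha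

omit [IsScalarTower F A A]

theorem isCompl_evenPart : IsCompl (evenPart α a) (axEig F A a β) := by
  constructor
  · have h := ha.decomp.submodule_iSupIndep 3
    refine (h.mono_right (sup_le (sup_le ?_ ?_) ?_)).symm
    · exact le_iSup₂_of_le 0 (by decide) le_rfl
    · exact le_iSup₂_of_le 1 (by decide) le_rfl
    · exact le_iSup₂_of_le 2 (by decide) le_rfl
  · rw [codisjoint_iff_le_sup, ← ha.decomp.submodule_iSup_eq_top, evenPart, iSup_le_iff,
      Fin.forall_fin_succ, Fin.forall_fin_succ, Fin.forall_fin_two]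
    exact ⟨le_sup_of_le_left (le_sup_left.trans le_sup_left),
      le_sup_of_le_left (le_sup_right.trans le_sup_left), le_sup_of_le_left le_sup_right,
      le_sup_right⟩

theorem self_mem_evenPart : a ∈ evenPart α a :=
  Submodule.mem_sup_left (Submodule.mem_sup_left (by rw [mem_axEig, ha.idem, one_smul]))

theorem exists_smul_add_add_of_mem_evenPart {p : A} (hp : p ∈ evenPart α a) :
    ∃ l : F, ∃ u ∈ axEig F A a 0, ∃ v ∈ axEig F A a α, p = l • a + u + v := by
  obtain ⟨q, hq, v, hv, rfl⟩ := Submodule.mem_sup.1 hp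
  obtain ⟨y, hy, u, hu, rfl⟩ := Submodule.mem_sup.1 hq
  rw [ha.primitive] at hy
  obtain ⟨l, rfl⟩ := Submodule.mem_span_singleton.1 hy
  exact ⟨l, u, hu, v, hv, rfl⟩

theorem mul_mem_axEig_of_mem_evenPart {p w : A} (hp : p ∈ evenPart α a)
    (hw : w ∈ axEig F A a β) : p * w ∈ axEig F A a β := by
  obtain ⟨q, hq, v, hv, rfl⟩ := Submodule.mem_sup.1 hp
  obtain ⟨l, hl, u, hu, rfl⟩ := Submodule.mem_sup.1 hq
  rw [add_mul, add_mul]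
  exact add_mem (add_mem (ha.f1b l hl w hw) (ha.f0b u hu w hw)) (ha.fab v hv w hw)

theorem axis_mul_mul_eq_zero {u u' : A} (hu : u ∈ axEig F A a 0) (hu' : u' ∈ axEig F A a 0) :
    a * (u * u') = 0 :=
  mem_axEig_zero.1 (ha.f00 u hu u' hu')

theorem axis_mul_mul_eq_smul {u v : A} (hu : u ∈ axEig F A a 0) (hv : v ∈ axEig F A a α) :
    a * (u * v) = α • (u * v) :=
  ha.f0a u hu v hv

theorem exists_axis_mul_mul_eq_smul {v v' : A} (hv : v ∈ axEig F A a α) (hv' : v' ∈ axEig F A a α) :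
    ∃ r : F, a * (v * v') = r • a := by
  obtain ⟨y, hy, t, ht, h⟩ := Submodule.mem_sup.1 (ha.faa v hv v' hv')
  obtain ⟨r, rfl⟩ := Submodule.mem_span_singleton.1 (ha.primitive ▸ hy)
  exact ⟨r, by rw [← h, mul_add, mul_smul_comm, ha.idem, mem_axEig_zero.1 ht, add_zero]⟩

end Eigenspaces

section Grading

variable (ha : IsPrimitiveMonsterAxis F A α β a)

include ha

theorem mul_mem_evenPart {p q : A} (hp : p ∈ evenPart α a) (hq : q ∈ evenPart α a) :
    p * q ∈ evenPart α a := by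
  have h : Submodule.map₂ (LinearMap.mul F A) (evenPart α a) (evenPart α a) ≤ evenPart α a := by
    simp only [evenPart, Submodule.map₂_sup_left, Submodule.map₂_sup_right, sup_le_iff,
      Submodule.map₂_le, LinearMap.mul_apply', and_assoc]
    have h1 : axEig F A a 1 ≤ evenPart α a := le_sup_left.trans le_sup_left
    have h0 : axEig F A a 0 ≤ evenPart α a := le_sup_right.trans le_sup_left
    have hα : axEig F A a α ≤ evenPart α a := le_sup_right
    have swap {U V : Submodule F A} (h : ∀ x ∈ U, ∀ y ∈ V, x * y ∈ evenPart α a) :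
        ∀ y ∈ V, ∀ x ∈ U, y * x ∈ evenPart α a :=
      fun y hy x hx => mul_comm x y ▸ h x hx y hy
    have h10 : ∀ x ∈ axEig F A a 1, ∀ y ∈ axEig F A a 0, x * y ∈ evenPart α a :=
      fun x hx y hy => ha.f10 x hx y hy ▸ zero_mem _
    have h1α : ∀ x ∈ axEig F A a 1, ∀ y ∈ axEig F A a α, x * y ∈ evenPart α a :=
      fun x hx y hy => hα (ha.f1a x hx y hy)
    have h0α : ∀ x ∈ axEig F A a 0, ∀ y ∈ axEig F A a α, x * y ∈ evenPart α a :=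
      fun x hx y hy => hα (ha.f0a x hx y hy)
    exact ⟨fun x hx y hy => h1 (ha.f11 x hx y hy), swap h10, swap h1α, h10,
      fun x hx y hy => h0 (ha.f00 x hx y hy), swap h0α, h1α, h0α,
      fun x hx y hy => Submodule.mem_sup_left (ha.faa x hx y hy)⟩
  exact h (Submodule.apply_mem_map₂ _ hp hq)

/-- The Miyamoto involution `τ_a`, which fixes the even part of `a` and negates `A_β`. -/
noncomputable def miyamoto : A →ₙₐ[F] A :=
  gradingInvolution ha.isCompl_evenPart (fun _ hx _ hy => ha.mul_mem_evenPart hx hy)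
    (fun _ hx _ hy => ha.mul_mem_axEig_of_mem_evenPart hx hy) ha.fbb

theorem miyamoto_add {p w : A} (hp : p ∈ evenPart α a) (hw : w ∈ axEig F A a β) :
    ha.miyamoto (p + w) = p - w :=
  gradingInvolution_add ha.isCompl_evenPart _ _ _ hp hw

theorem miyamoto_of_mem_evenPart {p : A} (hp : p ∈ evenPart α a) : ha.miyamoto p = p := by
  simpa using ha.miyamoto_add hp (zero_mem _)

theorem exists_evenPart_add (x : A) : ∃ p ∈ evenPart α a, ∃ w ∈ axEig F A a β,
    x = p + w ∧ ha.miyamoto x = p - w := by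
  obtain ⟨p, hp, w, hw, rfl⟩ :=
    Submodule.mem_sup.1 (ha.isCompl_evenPart.sup_eq_top.ge (Submodule.mem_top (x := x)))
  exact ⟨p, hp, w, hw, rfl, ha.miyamoto_add hp hw⟩

theorem miyamoto_miyamoto (x : A) : ha.miyamoto (ha.miyamoto x) = x := by
  obtain ⟨p, hp, w, hw, rfl, h⟩ := ha.exists_evenPart_add x
  rw [h, sub_eq_add_neg, ha.miyamoto_add hp (neg_mem hw), sub_neg_eq_add]

theorem miyamoto_self : ha.miyamoto a = a :=
  ha.miyamoto_of_mem_evenPart ha.self_mem_evenPart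

theorem sProd_miyamoto (b : A) : sProd β a (ha.miyamoto b) = sProd β a b := by
  obtain ⟨p, -, w, hw, rfl, h⟩ := ha.exists_evenPart_add b
  rw [mem_axEig] at hw
  rw [h, sProd, sProd, mul_sub, mul_add, hw]
  module

theorem sProd_mem_evenPart (b : A) : sProd β a b ∈ evenPart α a := by
  obtain ⟨p, hp, w, hw, rfl, -⟩ := ha.exists_evenPart_add b
  have e : sProd β a (p + w) = a * p - β • (a + p) := by
    rw [mem_axEig] at hw
    rw [sProd, mul_add, hw]
    module
  rw [e]
  exact sub_mem (ha.mul_mem_evenPart ha.self_mem_evenPart hp)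
    (Submodule.smul_mem _ _ (add_mem ha.self_mem_evenPart hp))

theorem sProd_self_miyamoto_mem_evenPart (b : A) :
    sProd β b (ha.miyamoto b) ∈ evenPart α a := by
  obtain ⟨p, hp, w, hw, rfl, h⟩ := ha.exists_evenPart_add b
  have e : sProd β (p + w) (p - w) = p * p - w * w - (2 * β) • p := by
    rw [sProd, mul_sub, add_mul, add_mul, mul_comm w p]
    module
  rw [h, e]
  exact sub_mem (sub_mem (ha.mul_mem_evenPart hp hp) (ha.fbb w hw w hw))
    (Submodule.smul_mem _ _ hp)

theorem add_miyamoto_mem_evenPart (b : A) : b + ha.miyamoto b ∈ evenPart α a := by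
  obtain ⟨p, hp, w, -, hb, hb'⟩ := ha.exists_evenPart_add b
  rw [hb', hb, add_add_sub_cancel]
  exact add_mem hp hp

theorem mul_add_miyamoto (b : A) : a * (b + ha.miyamoto b) =
    (2 : F) • sProd β a b + (2 * β) • a + β • (b + ha.miyamoto b) := by
  rw [mul_add, mul_eq_sProd_add β a b, mul_eq_sProd_add β a (ha.miyamoto b), ha.sProd_miyamoto]
  module

theorem exists_components (b : A) : ∃ l g : F, ∃ u ∈ axEig F A a 0, ∃ v ∈ axEig F A a α,
    b + ha.miyamoto b = l • a + u + v ∧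
      (2 : F) • sProd β a b = g • a + (-β • u + (α - β) • v) := by
  obtain ⟨l, u, hu, v, hv, hx⟩ :=
    ha.exists_smul_add_add_of_mem_evenPart (ha.add_miyamoto_mem_evenPart b)
  refine ⟨l, l - β * l - 2 * β, u, hu, v, hv, hx, ?_⟩
  have h := ha.mul_add_miyamoto b
  rw [mem_axEig] at hv
  rw [mem_axEig_zero] at hu
  rw [hx, mul_add, mul_add, mul_smul_comm, ha.idem, hu, hv] at h
  linear_combination (norm := module) -h

/-- For `p = u + v` and `q = a p - β p = -β u + (α - β) v`, the products `p p`, `p q`, `q q` are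
combinations of `u u`, `u v`, `v v`, on which `a` acts as `0`, as `α`, and with image in `F a`. -/
theorem fusion_relations {u v : A} (hu : u ∈ axEig F A a 0) (hv : v ∈ axEig F A a α) :
    let p := u + v
    let q := -β • u + (α - β) • v
    (α - 2 * β) • (a * (p * p)) - (2 : F) • (a * (p * q)) ∈ Submodule.span F {a} ∧
    (α - 2 * β) • ((β * (α - β)) • (p * p) + (α - 2 * β) • (p * q) - q * q) - α • (a * (p * q)) ∈
      Submodule.span F {a} := by
  intro p q
  obtain ⟨r, hr⟩ := ha.exists_axis_mul_mul_eq_smul hv hv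
  have hpp : p * p = u * u + (2 : F) • (u * v) + v * v := by
    simp only [p, mul_add, add_mul, mul_comm v u]
    module
  have hpq : p * q = -β • (u * u) + (α - 2 * β) • (u * v) + (α - β) • (v * v) := by
    simp only [p, q, mul_add, add_mul, mul_smul_comm, mul_comm v u]
    module
  have hqq : q * q = β ^ 2 • (u * u) - (2 * β * (α - β)) • (u * v) + (α - β) ^ 2 • (v * v) := by
    simp only [q, mul_add, add_mul, mul_smul_comm, smul_mul_assoc, mul_comm v u]
    module
  have happ : a * (p * p) = (2 * α) • (u * v) + r • a := by
    rw [hpp, mul_add, mul_add, mul_smul_comm, ha.axis_mul_mul_eq_zero hu hu,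
      ha.axis_mul_mul_eq_smul hu hv, hr]
    module
  have hapq : a * (p * q) = ((α - 2 * β) * α) • (u * v) + ((α - β) * r) • a := by
    simp only [hpq, mul_add, mul_smul_comm, ha.axis_mul_mul_eq_zero hu hu,
      ha.axis_mul_mul_eq_smul hu hv, hr]
    module
  rw [Submodule.mem_span_singleton, Submodule.mem_span_singleton]
  refine ⟨⟨-α * r, ?_⟩, ⟨-α * (α - β) * r, ?_⟩⟩
  · rw [happ, hapq]
    module
  · rw [hpp, hqq, hapq, hpq]
    module

end Grading

section InvariantSpan

/-- The span of `a` and of the elements `b + τ b` and `s(a, b)`, where `τ` is the Miyamoto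
involution of `a`. If `α ≠ 0` and `2 ≠ 0`, this is the span of `a` and of the components of `b` in
`A_0` and `A_α`. -/
def invariantSpan (ha : IsPrimitiveMonsterAxis F A α β a) (b : A) : Submodule F A :=
  Submodule.span F {a, b + ha.miyamoto b, sProd β a b}

variable (ha : IsPrimitiveMonsterAxis F A α β a)

theorem invariantSpan_le_iff {W : Submodule F A} : ha.invariantSpan b ≤ W ↔
    a ∈ W ∧ b + ha.miyamoto b ∈ W ∧ sProd β a b ∈ W := by
  simp [invariantSpan, Submodule.span_le, Set.insert_subset_iff]

theorem exists_two_smul_mul_sProd (b : A) : ∃ k : F, (2 : F) • (a * sProd β a b) =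
    (α - β) • ((2 : F) • sProd β a b + β • (b + ha.miyamoto b)) + k • a := by
  obtain ⟨l, g, u, hu, v, hv, hx, hs⟩ := ha.exists_components b
  refine ⟨g - (α - β) * (g + β * l), ?_⟩
  rw [mem_axEig_zero] at hu
  rw [mem_axEig] at hv
  rw [hx, ← mul_smul_comm, hs]
  simp only [mul_add, mul_smul_comm, ha.idem, hu, hv]
  module

theorem mul_mem_invariantSpan (h2 : (2 : F) ≠ 0) {x : A} (hx : x ∈ ha.invariantSpan b) :
    a * x ∈ ha.invariantSpan b := by
  obtain ⟨ma, mx, ms⟩ := ha.invariantSpan_le_iff.1 (le_refl (ha.invariantSpan b))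
  have has : a * sProd β a b ∈ ha.invariantSpan b := by
    obtain ⟨k, hk⟩ := ha.exists_two_smul_mul_sProd b
    rw [← Submodule.smul_mem_iff _ h2, hk]
    exact add_mem (Submodule.smul_mem _ _ (add_mem (Submodule.smul_mem _ _ ms)
      (Submodule.smul_mem _ _ mx))) (Submodule.smul_mem _ _ ma)
  have hax : a * (b + ha.miyamoto b) ∈ ha.invariantSpan b := by
    rw [ha.mul_add_miyamoto]
    exact add_mem (add_mem (Submodule.smul_mem _ _ ms) (Submodule.smul_mem _ _ ma))
      (Submodule.smul_mem _ _ mx)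
  have h : ha.invariantSpan b ≤ (ha.invariantSpan b).comap (LinearMap.mulLeft F a) :=
    ha.invariantSpan_le_iff.2 ⟨by simpa [ha.idem] using ma, hax, has⟩
  exact h hx

end InvariantSpan

section TwoAxes

variable (ha : IsPrimitiveMonsterAxis F A α β a) (hb : IsPrimitiveMonsterAxis F A α β b)

include hb in
theorem add_miyamoto_mul_self : (b + ha.miyamoto b) * (b + ha.miyamoto b) =
    (1 + 2 * β) • (b + ha.miyamoto b) + (2 : F) • sProd β b (ha.miyamoto b) := by
  have hcc : ha.miyamoto b * ha.miyamoto b = ha.miyamoto b := by rw [← map_mul, hb.idem]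
  rw [mul_add, add_mul, add_mul, hb.idem, hcc, mul_comm (ha.miyamoto b) b,
    mul_eq_sProd_add β b (ha.miyamoto b)]
  module

theorem exists_two_smul_add_miyamoto_mul_sProd :
    ∃ k : F, (2 : F) • ((b + ha.miyamoto b) * sProd β a b) =
      (α - β) • ((4 : F) • sProd β a b + (2 * β) • a
        + β • (hb.miyamoto a + ha.miyamoto (hb.miyamoto a))) + k • (b + ha.miyamoto b) := by
  obtain ⟨k, hk⟩ := hb.exists_two_smul_mul_sProd a
  rw [sProd_comm b a] at hk
  have hk' := congrArg ha.miyamoto hk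
  simp only [map_mul, map_add, map_smul, ha.miyamoto_self,
    ha.miyamoto_of_mem_evenPart (ha.sProd_mem_evenPart b)] at hk'
  refine ⟨k, ?_⟩
  rw [add_mul, smul_add, hk, hk']
  module

variable (h2 : (2 : F) ≠ 0)

include h2

include hb in
theorem sq_sub_two_smul_sProd_mem (l : F) :
    (b + ha.miyamoto b - l • a) * (b + ha.miyamoto b - l • a)
      - (2 : F) • sProd β b (ha.miyamoto b) ∈ ha.invariantSpan b := by
  obtain ⟨ma, mx, -⟩ := ha.invariantSpan_le_iff.1 (le_refl (ha.invariantSpan b))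
  have hax := ha.mul_mem_invariantSpan h2 mx
  have hxx := add_miyamoto_mul_self ha hb
  generalize b + ha.miyamoto b = x at *
  generalize ha.invariantSpan b = Y at *
  have e : (x - l • a) * (x - l • a) - (2 : F) • sProd β b (ha.miyamoto b) =
      (1 + 2 * β) • x - (2 * l) • (a * x) + l ^ 2 • a := by
    simp only [mul_sub, sub_mul, mul_smul_comm, smul_mul_assoc, mul_comm x a, ha.idem, hxx]
    module
  rw [e]
  exact add_mem (sub_mem (Y.smul_mem _ mx) (Y.smul_mem _ hax)) (Y.smul_mem _ ma)

theorem mul_sub_smul_add_miyamoto_mem (l g : F) :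
    (b + ha.miyamoto b - l • a) * ((2 : F) • sProd β a b - g • a)
      - (β * (α - β)) • (hb.miyamoto a + ha.miyamoto (hb.miyamoto a)) ∈ ha.invariantSpan b := by
  obtain ⟨ma, mx, ms⟩ := ha.invariantSpan_le_iff.1 (le_refl (ha.invariantSpan b))
  have hax := ha.mul_mem_invariantSpan h2 mx
  have has := ha.mul_mem_invariantSpan h2 ms
  obtain ⟨k, hxs⟩ := exists_two_smul_add_miyamoto_mul_sProd ha hb
  generalize hb.miyamoto a + ha.miyamoto (hb.miyamoto a) = y at *
  generalize sProd β a b = s at *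
  generalize b + ha.miyamoto b = x at *
  generalize ha.invariantSpan b = Y at *
  have e : (x - l • a) * ((2 : F) • s - g • a) - (β * (α - β)) • y =
      (4 * (α - β)) • s + (2 * β * (α - β) + l * g) • a + k • x - g • (a * x)
        - (2 * l) • (a * s) := by
    simp only [mul_sub, sub_mul, mul_smul_comm, smul_mul_assoc, mul_comm x a, ha.idem]
    linear_combination (norm := module) hxs
  rw [e]
  exact sub_mem (sub_mem (add_mem (add_mem (Y.smul_mem _ ms) (Y.smul_mem _ ma))
    (Y.smul_mem _ mx)) (Y.smul_mem _ hax)) (Y.smul_mem _ has)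

theorem sq_sub_four_smul_sq_mem (b : A) (g : F) :
    ((2 : F) • sProd β a b - g • a) * ((2 : F) • sProd β a b - g • a)
      - (4 : F) • (sProd β a b * sProd β a b) ∈ ha.invariantSpan b := by
  obtain ⟨ma, -, ms⟩ := ha.invariantSpan_le_iff.1 (le_refl (ha.invariantSpan b))
  have has := ha.mul_mem_invariantSpan h2 ms
  generalize sProd β a b = s at *
  have e : ((2 : F) • s - g • a) * ((2 : F) • s - g • a) - (4 : F) • (s * s) =
      g ^ 2 • a - (4 * g) • (a * s) := by
    simp only [mul_sub, sub_mul, mul_smul_comm, smul_mul_assoc, mul_comm s a, ha.idem]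
    module
  rw [e]
  exact sub_mem (Submodule.smul_mem _ _ ma) (Submodule.smul_mem _ _ has)

theorem fusion_relations_orbit_mem :
    let t := sProd β b (ha.miyamoto b)
    let y := hb.miyamoto a + ha.miyamoto (hb.miyamoto a)
    (α - 2 * β) • (a * t) - (β * (α - β)) • (a * y) ∈ ha.invariantSpan b ∧
    (4 * (α - 2 * β)) • (sProd β a b * sProd β a b)
      - (2 * β * (α - β) * (α - 2 * β)) • t - (β * (α - β) * (α - 2 * β) ^ 2) • y
      + (α * β * (α - β)) • (a * y) ∈ ha.invariantSpan b := by
  intro t y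
  obtain ⟨l, g, u, hu, v, hv, hx, hs⟩ := ha.exists_components b
  rw [add_assoc, ← sub_eq_iff_eq_add'] at hx
  rw [← sub_eq_iff_eq_add'] at hs
  obtain ⟨hI, hII⟩ := ha.fusion_relations hu hv
  have hpp := sq_sub_two_smul_sProd_mem ha hb h2 l
  have hpq := mul_sub_smul_add_miyamoto_mem ha hb h2 l g
  have hqq := sq_sub_four_smul_sq_mem ha h2 b g
  rw [hx] at hpp
  rw [hx, hs] at hpq
  rw [hs] at hqq
  have happ := ha.mul_mem_invariantSpan h2 hpp
  have hapq := ha.mul_mem_invariantSpan h2 hpq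
  rw [mul_sub, mul_smul_comm] at happ hapq
  have hspan : Submodule.span F {a} ≤ ha.invariantSpan b :=
    Submodule.span_mono (Set.singleton_subset_iff.2 (Set.mem_insert a _))
  replace hI := hspan hI
  replace hII := hspan hII
  generalize ha.invariantSpan b = Y at *
  constructor
  · rw [← Y.smul_mem_iff h2]
    convert sub_mem (add_mem hI (Y.smul_mem 2 hapq)) (Y.smul_mem (α - 2 * β) happ) using 1
    module
  · convert sub_mem (Y.smul_mem (α - 2 * β) (sub_mem (add_mem (Y.smul_mem (β * (α - β)) hpp)
      (Y.smul_mem (α - 2 * β) hpq)) hqq)) (add_mem hII (Y.smul_mem α hapq)) using 1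
    module

/-- As `s(a, b)` is symmetric, exchanging `a` and `b` and subtracting eliminates `s(a, b) ^ 2` and
leaves a relation for the axis `τ_b (τ_a b)`. -/
theorem sProd_sq_relation_mem :
    (4 * (α - 2 * β)) • (sProd β a b * sProd β a b)
      - (β * (α - β) ^ 2 * (α - 4 * β)) • (hb.miyamoto a + ha.miyamoto (hb.miyamoto a))
      - (2 * β * (α - β)) • ((α - 2 * β) • sProd β b (ha.miyamoto b)
        - α • sProd β a (hb.miyamoto a)) ∈ ha.invariantSpan b := by
  have h := (fusion_relations_orbit_mem ha hb h2).2
  have ma := (ha.invariantSpan_le_iff.1 (le_refl (ha.invariantSpan b))).1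
  rw [ha.mul_add_miyamoto] at h
  convert sub_mem h (Submodule.smul_mem _ (2 * α * β ^ 2 * (α - β)) ma) using 1
  module

end TwoAxes

section Multipliers

variable (ha : IsPrimitiveMonsterAxis F A α β a) {W : Submodule F A}

include ha

theorem exists_mem_components_of_mem_evenPart (hα0 : α ≠ 0) (haW : a ∈ W)
    (ham : a ∈ multipliers W) {y : A} (hy : y ∈ W) (hye : y ∈ evenPart α a) :
    ∃ m : F, ∃ y₀ ∈ axEig F A a 0, ∃ y₁ ∈ axEig F A a α,
      y = m • a + y₀ + y₁ ∧ y₀ ∈ W ∧ y₁ ∈ W := by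
  obtain ⟨m, y₀, hy₀, y₁, hy₁, rfl⟩ := ha.exists_smul_add_add_of_mem_evenPart hye
  have e : a * (m • a + y₀ + y₁) - m • a = α • y₁ := by
    rw [mul_add, mul_add, mul_smul_comm, ha.idem, mem_axEig_zero.1 hy₀, mem_axEig.1 hy₁]
    abel
  have hy₁W : y₁ ∈ W := by
    rw [← W.smul_mem_iff hα0, ← e]
    exact sub_mem (ham _ hy) (W.smul_mem m haW)
  refine ⟨m, y₀, hy₀, y₁, hy₁, rfl, ?_, hy₁W⟩
  rwa [W.add_mem_iff_left hy₁W, W.add_mem_iff_right (W.smul_mem m haW)] at hy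

/-- Multiplication by `a` separates `u y` from `v y`, because for `y` in `A_0` or `A_α` the two
products lie in parts of the algebra on which `a` acts differently. -/
theorem mul_mem_of_add_mem_multipliers (hα0 : α ≠ 0) (haW : a ∈ W) (ham : a ∈ multipliers W)
    {u v : A} (hu : u ∈ axEig F A a 0) (hv : v ∈ axEig F A a α) (huv : u + v ∈ multipliers W)
    {y : A} (hy : y ∈ W) (hye : y ∈ evenPart α a) : u * y ∈ W ∧ v * y ∈ W := by
  obtain ⟨m, y₀, hy₀, y₁, hy₁, rfl, hy₀W, hy₁W⟩ :=
    ha.exists_mem_components_of_mem_evenPart hα0 haW ham hy hye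
  have hua : u * a = 0 := by rw [mul_comm, mem_axEig_zero.1 hu]
  have hva : v * a ∈ W := by simpa only [add_mul, hua, zero_add] using huv a haW
  have h₀ := huv _ hy₀W
  have h₁ := huv _ hy₁W
  rw [add_mul] at h₀ h₁
  have hv₀ : v * y₀ ∈ W := by
    have h := ham _ h₀
    rw [mul_add, ha.axis_mul_mul_eq_zero hu hy₀, zero_add, mul_comm v,
      ha.axis_mul_mul_eq_smul hy₀ hv, W.smul_mem_iff hα0] at h
    rwa [mul_comm]
  have hu₁ : u * y₁ ∈ W := by
    obtain ⟨r, hr⟩ := ha.exists_axis_mul_mul_eq_smul hv hy₁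
    have h := ham _ h₁
    rwa [mul_add, ha.axis_mul_mul_eq_smul hu hy₁, hr, W.add_mem_iff_left (W.smul_mem r haW),
      W.smul_mem_iff hα0] at h
  have hu₀ : u * y₀ ∈ W := (W.add_mem_iff_left hv₀).1 h₀
  have hv₁ : v * y₁ ∈ W := (W.add_mem_iff_right hu₁).1 h₁
  simp only [mul_add, mul_smul_comm, hua, smul_zero, zero_add]
  exact ⟨add_mem hu₀ hu₁, add_mem (add_mem (W.smul_mem m hva) hv₀) hv₁⟩

theorem sProd_mul_mem (h2 : (2 : F) ≠ 0) (hα0 : α ≠ 0) (haW : a ∈ W) (ham : a ∈ multipliers W)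
    (hbm : b ∈ multipliers W) (hcm : ha.miyamoto b ∈ multipliers W) {y : A} (hy : y ∈ W)
    (hye : y ∈ evenPart α a) : sProd β a b * y ∈ W := by
  obtain ⟨l, g, u, hu, v, hv, hx, hs⟩ := ha.exists_components b
  have huv : u + v ∈ multipliers W := by
    rw [← Submodule.add_mem_iff_right _ (Submodule.smul_mem _ l ham), ← add_assoc, ← hx]
    exact add_mem hbm hcm
  obtain ⟨huy, hvy⟩ := ha.mul_mem_of_add_mem_multipliers hα0 haW ham hu hv huv hy hye
  rw [← W.smul_mem_iff h2, ← smul_mul_assoc, hs]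
  simp only [add_mul, smul_mul_assoc]
  exact add_mem (W.smul_mem _ (ham y hy)) (add_mem (W.smul_mem _ huy) (W.smul_mem _ hvy))

end Multipliers

end IsPrimitiveMonsterAxis

section RehrenSpan

/-- The span of the five consecutive axes `τ_a τ_b a`, `τ_a b`, `a`, `b`, `τ_b a` of the orbit of
`a` and `b`, and of the elements `s(a, b)`, `s(a, τ_b a)` and `s(b, τ_a b)`. -/
def rehrenSpan (ha : IsPrimitiveMonsterAxis F A α β a) (hb : IsPrimitiveMonsterAxis F A α β b) :
    Submodule F A :=
  Submodule.span F (Set.range ![a, b, ha.miyamoto b, hb.miyamoto a, ha.miyamoto (hb.miyamoto a),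
    sProd β a b, sProd β a (hb.miyamoto a), sProd β b (ha.miyamoto b)])

variable (ha : IsPrimitiveMonsterAxis F A α β a) (hb : IsPrimitiveMonsterAxis F A α β b)

theorem rehrenSpan_le_iff {W : Submodule F A} : rehrenSpan ha hb ≤ W ↔
    a ∈ W ∧ b ∈ W ∧ ha.miyamoto b ∈ W ∧ hb.miyamoto a ∈ W ∧ ha.miyamoto (hb.miyamoto a) ∈ W ∧
    sProd β a b ∈ W ∧ sProd β a (hb.miyamoto a) ∈ W ∧ sProd β b (ha.miyamoto b) ∈ W := by
  rw [rehrenSpan, Submodule.span_le, Set.range_subset_iff]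
  simp [Fin.forall_fin_succ]

theorem rank_rehrenSpan_le : Module.rank F (rehrenSpan ha hb) ≤ 8 := by
  refine (rank_span_le _).trans ?_
  simpa using Cardinal.mk_range_le_lift (f := ![a, b, ha.miyamoto b, hb.miyamoto a,
    ha.miyamoto (hb.miyamoto a), sProd β a b, sProd β a (hb.miyamoto a), sProd β b (ha.miyamoto b)])

theorem miyamoto_mem_rehrenSpan {x : A} (hx : x ∈ rehrenSpan ha hb) :
    ha.miyamoto x ∈ rehrenSpan ha hb := by
  obtain ⟨ma, mb, mc, md, me, ms, msd, msc⟩ := (rehrenSpan_le_iff ha hb).1 le_rfl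
  have h : rehrenSpan ha hb ≤ (rehrenSpan ha hb).comap (ha.miyamoto : A →ₗ[F] A) := by
    simp only [rehrenSpan_le_iff, Submodule.mem_comap, LinearMap.coe_coe,
      ha.miyamoto_self, ha.miyamoto_miyamoto,
      ha.miyamoto_of_mem_evenPart (ha.sProd_mem_evenPart _),
      ha.miyamoto_of_mem_evenPart (ha.sProd_self_miyamoto_mem_evenPart _)]
    exact ⟨ma, mc, mb, me, md, ms, msd, msc⟩
  exact h hx

theorem invariantSpan_le_rehrenSpan : ha.invariantSpan b ≤ rehrenSpan ha hb := by
  obtain ⟨ma, mb, mc, -, -, ms, -, -⟩ := (rehrenSpan_le_iff ha hb).1 le_rfl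
  exact ha.invariantSpan_le_iff.2 ⟨ma, add_mem mb mc, ms⟩

theorem axis_mem_multipliers_rehrenSpan (h2 : (2 : F) ≠ 0) (h2β : α ≠ 2 * β) :
    a ∈ multipliers (rehrenSpan ha hb) := by
  obtain ⟨ma, mb, mc, md, me, ms, msd, -⟩ := (rehrenSpan_le_iff ha hb).1 le_rfl
  have hmul {z : A} (hz : z ∈ rehrenSpan ha hb) (h : sProd β a z ∈ rehrenSpan ha hb) :
      a * z ∈ rehrenSpan ha hb := by
    rw [mul_eq_sProd_add β]
    exact add_mem h (Submodule.smul_mem _ _ (add_mem ma hz))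
  have hs {z : A} (hz : z ∈ rehrenSpan ha hb) (hz' : ha.miyamoto z ∈ rehrenSpan ha hb)
      (h : sProd β a z ∈ rehrenSpan ha hb) : a * sProd β a z ∈ rehrenSpan ha hb :=
    ha.invariantSpan_le_iff.2 ⟨ma, add_mem hz hz', h⟩
      (ha.mul_mem_invariantSpan h2 (ha.invariantSpan_le_iff.1 le_rfl).2.2)
  have had := hmul md msd
  have hae := hmul me (by rwa [ha.sProd_miyamoto])
  have hat : a * sProd β b (ha.miyamoto b) ∈ rehrenSpan ha hb := by
    have h := invariantSpan_le_rehrenSpan ha hb (ha.fusion_relations_orbit_mem hb h2).1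
    rwa [mul_add, Submodule.sub_mem_iff_left _ (Submodule.smul_mem _ _ (add_mem had hae)),
      Submodule.smul_mem_iff _ (sub_ne_zero.2 h2β)] at h
  have h : rehrenSpan ha hb ≤ (rehrenSpan ha hb).comap (LinearMap.mulLeft F a) :=
    (rehrenSpan_le_iff ha hb).2 ⟨by simpa [ha.idem] using ma, hmul mb ms,
      hmul mc (by rwa [ha.sProd_miyamoto]), had, hae, hs mb mc ms, hs md me msd, hat⟩
  exact fun y hy => h hy

variable (h2 : (2 : F) ≠ 0) (hβ0 : β ≠ 0) (hαβ : α ≠ β) (h4β : α ≠ 4 * β)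

include h2 hβ0 hαβ h4β

theorem rehrenSpan_swap_le : rehrenSpan hb ha ≤ rehrenSpan ha hb := by
  obtain ⟨ma, mb, mc, md, me, ms, msd, msc⟩ := (rehrenSpan_le_iff ha hb).1 le_rfl
  have ms' : sProd β b a ∈ rehrenSpan ha hb := by rwa [sProd_comm]
  refine (rehrenSpan_le_iff hb ha).2 ⟨mb, ma, md, mc, ?_, ms', msc, msd⟩
  have h := invariantSpan_le_rehrenSpan ha hb (ha.sProd_sq_relation_mem hb h2)
  have h' := hb.invariantSpan_le_iff.2 ⟨mb, add_mem ma md, ms'⟩ (hb.sProd_sq_relation_mem ha h2)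
  rw [Submodule.sub_mem_iff_left _ (Submodule.smul_mem _ _ (sub_mem (Submodule.smul_mem _ _ msc)
    (Submodule.smul_mem _ _ msd))), Submodule.sub_mem_iff_left _
    (Submodule.smul_mem _ _ (add_mem md me))] at h
  rw [Submodule.sub_mem_iff_left _ (Submodule.smul_mem _ _ (sub_mem (Submodule.smul_mem _ _ msd)
    (Submodule.smul_mem _ _ msc))), sProd_comm b a, Submodule.sub_mem_iff_right _ h,
    Submodule.smul_mem_iff _ (mul_ne_zero (mul_ne_zero hβ0 (pow_ne_zero 2 (sub_ne_zero.2 hαβ)))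
      (sub_ne_zero.2 h4β)), Submodule.add_mem_iff_right _ mc] at h'
  exact h'

theorem rehrenSpan_swap : rehrenSpan hb ha = rehrenSpan ha hb :=
  le_antisymm (rehrenSpan_swap_le ha hb h2 hβ0 hαβ h4β) (rehrenSpan_swap_le hb ha h2 hβ0 hαβ h4β)

variable (h2β : α ≠ 2 * β)

include h2β

theorem orbit_mem_multipliers_rehrenSpan :
    b ∈ multipliers (rehrenSpan ha hb) ∧ ha.miyamoto b ∈ multipliers (rehrenSpan ha hb) ∧
    hb.miyamoto a ∈ multipliers (rehrenSpan ha hb) ∧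
    ha.miyamoto (hb.miyamoto a) ∈ multipliers (rehrenSpan ha hb) ∧
    hb.miyamoto (ha.miyamoto b) ∈ multipliers (rehrenSpan ha hb) := by
  have hswap := rehrenSpan_swap ha hb h2 hβ0 hαβ h4β
  have conjA {x : A} (hx : x ∈ multipliers (rehrenSpan ha hb)) :
      ha.miyamoto x ∈ multipliers (rehrenSpan ha hb) :=
    map_mem_multipliers ha.miyamoto_miyamoto (fun _ => miyamoto_mem_rehrenSpan ha hb) hx
  have conjB {x : A} (hx : x ∈ multipliers (rehrenSpan ha hb)) :
      hb.miyamoto x ∈ multipliers (rehrenSpan ha hb) := by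
    rw [← hswap] at hx ⊢
    exact map_mem_multipliers hb.miyamoto_miyamoto (fun _ => miyamoto_mem_rehrenSpan hb ha) hx
  have mulA := axis_mem_multipliers_rehrenSpan ha hb h2 h2β
  have mulB : b ∈ multipliers (rehrenSpan ha hb) :=
    hswap ▸ axis_mem_multipliers_rehrenSpan hb ha h2 h2β
  exact ⟨mulB, conjA mulB, conjB mulA, conjA (conjB mulA), conjB (conjA mulB)⟩

variable (hα0 : α ≠ 0)

include hα0

theorem rehrenSpan_le_multipliers : rehrenSpan ha hb ≤ multipliers (rehrenSpan ha hb) := by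
  obtain ⟨ma, mb, -, -, -, ms, msd, msc⟩ := (rehrenSpan_le_iff ha hb).1 le_rfl
  have mulA := axis_mem_multipliers_rehrenSpan ha hb h2 h2β
  obtain ⟨mulB, mulC, mulD, mulE, mulBC⟩ :=
    orbit_mem_multipliers_rehrenSpan ha hb h2 hβ0 hαβ h4β h2β
  have mem_multipliers {z : A} (hz : z ∈ rehrenSpan ha hb) (hs : z * sProd β a b ∈ rehrenSpan ha hb)
      (hsd : z * sProd β a (hb.miyamoto a) ∈ rehrenSpan ha hb)
      (hsc : z * sProd β b (ha.miyamoto b) ∈ rehrenSpan ha hb) :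
      z ∈ multipliers (rehrenSpan ha hb) := by
    have h : rehrenSpan ha hb ≤ (rehrenSpan ha hb).comap (LinearMap.mulLeft F z) := by
      simp only [rehrenSpan_le_iff, Submodule.mem_comap, LinearMap.mulLeft_apply]
      simp only [mul_comm z] at hs hsd hsc ⊢
      exact ⟨mulA z hz, mulB z hz, mulC z hz, mulD z hz, mulE z hz, hs, hsd, hsc⟩
    exact fun y hy => h hy
  have es := ha.sProd_mem_evenPart b
  have esd := ha.sProd_mem_evenPart (hb.miyamoto a)
  have esc := ha.sProd_self_miyamoto_mem_evenPart b
  have mulS {y : A} := ha.sProd_mul_mem h2 hα0 ma mulA mulB mulC (y := y)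
  have mulSD {y : A} := ha.sProd_mul_mem h2 hα0 ma mulA mulD mulE (y := y)
  have hscsc : sProd β b (ha.miyamoto b) * sProd β b (ha.miyamoto b) ∈ rehrenSpan ha hb :=
    hb.sProd_mul_mem h2 hα0 mb mulB mulC mulBC msc (hb.sProd_mem_evenPart _)
  refine (rehrenSpan_le_iff ha hb).2 ⟨mulA, mulB, mulC, mulD, mulE,
    mem_multipliers ms (mulS ms es) (mulS msd esd) (mulS msc esc),
    mem_multipliers msd (mulSD ms es) (mulSD msd esd) (mulSD msc esc),
    mem_multipliers msc ?_ ?_ hscsc⟩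
  · rw [mul_comm]
    exact mulS msc esc
  · rw [mul_comm]
    exact mulSD msc esc

theorem rehrenSpan_eq_top (htop : NonUnitalAlgebra.adjoin F ({a, b} : Set A) = ⊤) :
    rehrenSpan ha hb = ⊤ := by
  let S : NonUnitalSubalgebra F A :=
    { rehrenSpan ha hb with
      mul_mem' := fun {x y} hx hy =>
        rehrenSpan_le_multipliers ha hb h2 hβ0 hαβ h4β h2β hα0 hx y hy }
  obtain ⟨ma, mb, -⟩ := (rehrenSpan_le_iff ha hb).1 le_rfl
  have hS : NonUnitalAlgebra.adjoin F ({a, b} : Set A) ≤ S :=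
    NonUnitalAlgebra.adjoin_le (Set.pair_subset ma mb)
  exact Submodule.eq_top_iff'.2 fun x => hS (htop ▸ NonUnitalAlgebra.mem_top (R := F))

end RehrenSpan

end

theorem rehren_dimension_bound
    (hchar : ringChar F ≠ 2) (α β : F)
    (hα0 : α ≠ 0) (hα1 : α ≠ 1) (hβ0 : β ≠ 0) (hβ1 : β ≠ 1) (hαβ : α ≠ β)
    (h2β : α ≠ 2 * β) (h4β : α ≠ 4 * β)
    (hgen : IsTwoGeneratedMonsterType F A α β) :
    Module.rank F A ≤ 8 := by
  obtain ⟨a, b, ha, hb, htop⟩ := hgen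
  rw [← rank_top F A,
    ← rehrenSpan_eq_top ha hb (Ring.two_ne_zero hchar) hβ0 hαβ h4β h2β hα0 htop]
  exact rank_rehrenSpan_le ha hb
end

section
/- Let F be a field with char F ∉ {2, 3}. In the Highwater algebra H over F, the algebra decomposes as the direct sum H = E_1 ⊕ E_0 ⊕ E_2 ⊕ E_{1/2} of eigenspaces E_μ = {x ∈ H : a_0·x = μx} of the left multiplication operator by a_0, and moreover E_1 = F·a_0. -/
/- STATEMENT 3: in the Highwater algebra over a field of characteristic ≠ 2, 3,
the algebra is the direct sum of the eigenspaces of ad(a_0) for the eigenvalues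
1, 0, 2, 1/2, and the 1-eigenspace is F·a_0. -/

/-- The underlying vector space of the Highwater algebra: formal `F`-linear combinations
of basis elements `a_i` (`i : ℤ`, encoded `Sum.inl i`) and `s_j` (`j ≥ 1`, encoded
`Sum.inr (j - 1)`). -/
abbrev HW (F : Type*) [Field F] := (ℤ ⊕ ℕ) →₀ F

variable (F : Type*) [Field F]

/-- The axis `a_i` of the Highwater algebra. -/
noncomputable def hwa (i : ℤ) : HW F := Finsupp.single (Sum.inl i) 1

/-- The element `s_j` of the Highwater algebra (`s_0 = 0`). -/
noncomputable def hws : ℕ → HW F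
  | 0 => 0
  | j + 1 => Finsupp.single (Sum.inr j) 1

/-- Product of two basis elements of the Highwater algebra:
`a_i · a_k = (1/2)(a_i + a_k) + s_{|i-k|}`,
`a_i · s_j = -(3/4) a_i + (3/8)(a_{i-j} + a_{i+j}) + (3/2) s_j`,
`s_j · s_k = (3/4)(s_j + s_k) - (3/8)(s_{|j-k|} + s_{j+k})`. -/
noncomputable def hwBM : ℤ ⊕ ℕ → ℤ ⊕ ℕ → HW F
  | Sum.inl i, Sum.inl k => ((1 : F) / 2) • (hwa F i + hwa F k) + hws F (i - k).natAbs
  | Sum.inl i, Sum.inr j =>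
      (-(3 : F) / 4) • hwa F i
        + ((3 : F) / 8) • (hwa F (i - ((j : ℤ) + 1)) + hwa F (i + ((j : ℤ) + 1)))
        + ((3 : F) / 2) • hws F (j + 1)
  | Sum.inr j, Sum.inl i =>
      (-(3 : F) / 4) • hwa F i
        + ((3 : F) / 8) • (hwa F (i - ((j : ℤ) + 1)) + hwa F (i + ((j : ℤ) + 1)))
        + ((3 : F) / 2) • hws F (j + 1)
  | Sum.inr j, Sum.inr k =>
      ((3 : F) / 4) • (hws F (j + 1) + hws F (k + 1))
        - ((3 : F) / 8) • (hws F ((j : ℤ) - (k : ℤ)).natAbs + hws F (j + k + 2))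

/-- The multiplication of the Highwater algebra: the bilinear extension of `hwBM`. -/
noncomputable def hwMul (x y : HW F) : HW F :=
  x.sum fun i ci => y.sum fun j cj => (ci * cj) • hwBM F i j

lemma hwMul_zero (x : HW F) : hwMul F x 0 = 0 := by
  unfold hwMul
  simp

lemma hwMul_add (x y z : HW F) : hwMul F x (y + z) = hwMul F x y + hwMul F x z := by
  unfold hwMul
  rw [← Finsupp.sum_add]
  refine Finsupp.sum_congr fun i _ => ?_
  exact Finsupp.sum_add_index' (fun j => by simp) (fun j c1 c2 => by
    rw [mul_add, add_smul])

lemma hwMul_smul (c : F) (x y : HW F) : hwMul F x (c • y) = c • hwMul F x y := by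
  unfold hwMul
  rw [Finsupp.smul_sum]
  refine Finsupp.sum_congr fun i _ => ?_
  rw [Finsupp.sum_smul_index' (fun j => by simp), Finsupp.smul_sum]
  exact Finsupp.sum_congr fun j _ => by
    rw [smul_eq_mul, smul_smul, mul_left_comm]

/-- The `μ`-eigenspace of the left multiplication operator by `a_0` on the
Highwater algebra. -/
noncomputable def hwEig (μ : F) : Submodule F (HW F) where
  carrier := {x | hwMul F (hwa F 0) x = μ • x}
  zero_mem' := by simp [hwMul_zero]
  add_mem' := fun hx hy => by
    simp only [Set.mem_setOf_eq] at *
    rw [hwMul_add, hx, hy, smul_add]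
  smul_mem' := fun c x hx => by
    simp only [Set.mem_setOf_eq] at *
    rw [hwMul_smul, hx, smul_smul, smul_smul, mul_comm]

/-!
Put `y = a_{i-k} + a_{i+k}`. The operator `ad a_i` preserves the span of `a_i`, `y` and `s_k`, where
`a_i ↦ a_i`, `y ↦ a_i + (1/2) y + 2 s_k` and `4 s_k ↦ -3 a_i + (3/2) y + 6 s_k`; diagonalizing it
gives the eigenvalues `1, 0, 2`, while `a_{i+k} - a_{i-k}` has eigenvalue `1/2`. As `k` varies,
these eigenvectors span the algebra as soon as `2` is invertible, and only `a_i` has eigenvalue `1`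
among them. The four eigenvalues are distinct when `3 ≠ 0`, since `2 - 1/2 = 3/2`.
-/

/-- The adjoint operator of the axis `a_i`: multiplication by `a_i`, as a linear endomorphism. -/
noncomputable def hwAd (i : ℤ) : Module.End F (HW F) where
  toFun := hwMul F (hwa F i)
  map_add' := hwMul_add F _
  map_smul' c := hwMul_smul F c _

/-- The `0`-eigenvector `u_k = 6 a_i - 3 (a_{i-k} + a_{i+k}) + 4 s_{|k|}` of `ad a_i`. Every integer
`k` is allowed, so that no case distinction on its sign is needed; `u_{-k} = u_k` and `u_0 = 0`. -/
noncomputable def hwu (i k : ℤ) : HW F :=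
  (6 : F) • hwa F i - (3 : F) • (hwa F (i - k) + hwa F (i + k)) + (4 : F) • hws F k.natAbs

/-- The `2`-eigenvector `v_k = 2 a_i - (a_{i-k} + a_{i+k}) - 4 s_{|k|}` of `ad a_i`, with
`v_{-k} = v_k` and `v_0 = 0`. -/
noncomputable def hwv (i k : ℤ) : HW F :=
  (2 : F) • hwa F i - (hwa F (i - k) + hwa F (i + k)) - (4 : F) • hws F k.natAbs

/-- The `1/2`-eigenvector `w_k = a_{i+k} - a_{i-k}` of `ad a_i`, with `w_{-k} = -w_k`. -/
noncomputable def hww (i k : ℤ) : HW F :=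
  hwa F (i + k) - hwa F (i - k)

section

variable {F}

lemma hwEig_eq_eigenspace (μ : F) : hwEig F μ = (hwAd F 0).eigenspace μ := by
  ext x
  rw [Module.End.mem_eigenspace_iff]
  rfl

lemma hwMul_single_single (p q : ℤ ⊕ ℕ) :
    hwMul F (Finsupp.single p 1) (Finsupp.single q 1) = hwBM F p q := by
  simp [hwMul]

lemma hwAd_hwa (i k : ℤ) :
    hwAd F i (hwa F k) = (1 / 2 : F) • (hwa F i + hwa F k) + hws F (i - k).natAbs :=
  hwMul_single_single (Sum.inl i) (Sum.inl k)

lemma hwAd_hws_succ (i : ℤ) (j : ℕ) :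
    hwAd F i (hws F (j + 1)) = (-3 / 4 : F) • hwa F i
      + (3 / 8 : F) • (hwa F (i - (j + 1)) + hwa F (i + (j + 1))) + (3 / 2 : F) • hws F (j + 1) :=
  hwMul_single_single (Sum.inl i) (Sum.inr j)

lemma span_range_hwa_union_range_hws :
    Submodule.span F (Set.range (hwa F) ∪ Set.range (hws F)) = ⊤ := by
  rw [eq_top_iff, ← (Finsupp.basisSingleOne (R := F)).span_eq, Submodule.span_le,
    Finsupp.coe_basisSingleOne]
  rintro _ ⟨i | j, rfl⟩
  · exact Submodule.subset_span (.inl ⟨i, rfl⟩)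
  · exact Submodule.subset_span (.inr ⟨j + 1, rfl⟩)

lemma two_pow_three_smul_hwa (i k : ℤ) :
    (2 ^ 3 : F) • hwa F (i + k)
      = (8 : F) • hwa F i - hwu F i k - hwv F i k + (4 : F) • hww F i k := by
  rw [hwu, hwv, hww]
  module

lemma two_pow_four_smul_hws (i : ℤ) (j : ℕ) :
    (2 ^ 4 : F) • hws F j = hwu F i j - (3 : F) • hwv F i j := by
  rw [hwu, hwv, Int.natAbs_natCast]
  module

lemma hww_mem_eigenspace_half (i k : ℤ) : hww F i k ∈ (hwAd F i).eigenspace 2⁻¹ := by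
  rw [Module.End.mem_eigenspace_iff, hww, map_sub, hwAd_hwa, hwAd_hwa, sub_sub_cancel,
    sub_add_cancel_left, Int.natAbs_neg]
  module

variable [NeZero (2 : F)]

lemma hwAd_hwa_self (i : ℤ) : hwAd F i (hwa F i) = hwa F i := by
  rw [hwAd_hwa, sub_self, Int.natAbs_zero, hws]
  match_scalars
  field_simp
  norm_num

lemma hwAd_hwa_sub_add_hwa_add (i k : ℤ) :
    hwAd F i (hwa F (i - k) + hwa F (i + k))
      = hwa F i + (1 / 2 : F) • (hwa F (i - k) + hwa F (i + k)) + (2 : F) • hws F k.natAbs := by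
  rw [map_add, hwAd_hwa, hwAd_hwa, sub_sub_cancel, sub_add_cancel_left, Int.natAbs_neg]
  match_scalars <;> field_simp <;> norm_num

lemma four_smul_hwAd_hws (i : ℤ) (j : ℕ) :
    (4 : F) • hwAd F i (hws F j)
      = (-3 : F) • hwa F i + (3 / 2 : F) • (hwa F (i - j) + hwa F (i + j)) + (6 : F) • hws F j := by
  cases j with
  | zero =>
    rw [hws, map_zero, Nat.cast_zero, sub_zero, add_zero]
    match_scalars
    field_simp
    norm_num
  | succ j =>
    have four : (4 : F) = 2 ^ 2 := by norm_num
    have eight : (8 : F) = 2 ^ 3 := by norm_num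
    rw [hwAd_hws_succ, four, eight, Nat.cast_succ]
    match_scalars <;> field_simp
    norm_num

lemma four_smul_hwAd_hws_natAbs (i k : ℤ) :
    (4 : F) • hwAd F i (hws F k.natAbs)
      = (-3 : F) • hwa F i + (3 / 2 : F) • (hwa F (i - k) + hwa F (i + k))
        + (6 : F) • hws F k.natAbs := by
  obtain ⟨j, rfl | rfl⟩ := k.eq_nat_or_neg
  · exact four_smul_hwAd_hws i j
  · rw [Int.natAbs_neg, Int.natAbs_natCast, sub_neg_eq_add, ← sub_eq_add_neg,
      add_comm (hwa F (i + j)), four_smul_hwAd_hws]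

lemma hwa_mem_eigenspace_one (i : ℤ) : hwa F i ∈ (hwAd F i).eigenspace 1 := by
  rw [Module.End.mem_eigenspace_iff, hwAd_hwa_self, one_smul]

lemma hwu_mem_eigenspace_zero (i k : ℤ) : hwu F i k ∈ (hwAd F i).eigenspace 0 := by
  rw [Module.End.mem_eigenspace_iff, hwu, map_add, map_sub, map_smul, map_smul, map_smul,
    hwAd_hwa_self, hwAd_hwa_sub_add_hwa_add, four_smul_hwAd_hws_natAbs]
  module

lemma hwv_mem_eigenspace_two (i k : ℤ) : hwv F i k ∈ (hwAd F i).eigenspace 2 := by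
  rw [Module.End.mem_eigenspace_iff, hwv, map_sub, map_sub, map_smul, map_smul,
    hwAd_hwa_self, hwAd_hwa_sub_add_hwa_add, four_smul_hwAd_hws_natAbs]
  match_scalars <;> field_simp <;> norm_num

lemma span_hwa_sup_eigenspaces_eq_top (i : ℤ) :
    Submodule.span F {hwa F i} ⊔
      ((hwAd F i).eigenspace 0 ⊔ (hwAd F i).eigenspace 2 ⊔ (hwAd F i).eigenspace 2⁻¹) = ⊤ := by
  set W := Submodule.span F {hwa F i} ⊔
    ((hwAd F i).eigenspace 0 ⊔ (hwAd F i).eigenspace 2 ⊔ (hwAd F i).eigenspace 2⁻¹)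
  have two_pow_ne_zero (n : ℕ) : (2 ^ n : F) ≠ 0 := pow_ne_zero n two_ne_zero
  have axis_mem : hwa F i ∈ W := Submodule.mem_sup_left (Submodule.mem_span_singleton_self _)
  have u_mem (k : ℤ) : hwu F i k ∈ W := Submodule.mem_sup_right <|
    Submodule.mem_sup_left <| Submodule.mem_sup_left <| hwu_mem_eigenspace_zero i k
  have v_mem (k : ℤ) : hwv F i k ∈ W := Submodule.mem_sup_right <|
    Submodule.mem_sup_left <| Submodule.mem_sup_right <| hwv_mem_eigenspace_two i k
  have w_mem (k : ℤ) : hww F i k ∈ W := Submodule.mem_sup_right <|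
    Submodule.mem_sup_right <| hww_mem_eigenspace_half i k
  rw [eq_top_iff, ← span_range_hwa_union_range_hws, Submodule.span_le]
  rintro _ (⟨l, rfl⟩ | ⟨j, rfl⟩)
  · rw [← add_sub_cancel i l, SetLike.mem_coe, ← W.smul_mem_iff (two_pow_ne_zero 3),
      two_pow_three_smul_hwa]
    exact W.add_mem (W.sub_mem (W.sub_mem (W.smul_mem 8 axis_mem) (u_mem _)) (v_mem _))
      (W.smul_mem 4 (w_mem _))
  · rw [SetLike.mem_coe, ← W.smul_mem_iff (two_pow_ne_zero 4), two_pow_four_smul_hws i]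
    exact W.sub_mem (u_mem j) (W.smul_mem 3 (v_mem j))

lemma eigenspace_one_eq_span_hwa (i : ℤ) :
    (hwAd F i).eigenspace 1 = Submodule.span F {hwa F i} := by
  have span_le : Submodule.span F {hwa F i} ≤ (hwAd F i).eigenspace 1 :=
    (Submodule.span_singleton_le_iff_mem _ _).2 (hwa_mem_eigenspace_one i)
  have disjoint : Disjoint ((hwAd F i).eigenspace 1)
      ((hwAd F i).eigenspace 0 ⊔ (hwAd F i).eigenspace 2 ⊔ (hwAd F i).eigenspace 2⁻¹) := by
    have eigenspace_le {μ : F} (hμ : μ ≠ 1) : (hwAd F i).eigenspace μ ≤ _ :=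
      le_iSup₂ (f := fun (ν : F) (_ : ν ≠ 1) ↦ (hwAd F i).eigenspace ν) μ hμ
    refine ((hwAd F i).eigenspaces_iSupIndep 1).mono_right (sup_le (sup_le ?_ ?_) ?_)
    · exact eigenspace_le zero_ne_one
    · exact eigenspace_le (by simp [← one_add_one_eq_two])
    · exact eigenspace_le (by simp [← one_add_one_eq_two])
  exact (eq_of_le_of_inf_le_of_sup_le span_le (disjoint.eq_bot.trans_le bot_le)
    (le_top.trans_eq (span_hwa_sup_eigenspaces_eq_top i).symm)).symm

lemma injective_one_zero_two_half [NeZero (3 : F)] :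
    Function.Injective (![1, 0, 2, 2⁻¹] : Fin 4 → F) := by
  have one_ne_two : (1 : F) ≠ 2 := by simp [← one_add_one_eq_two]
  have zero_ne_two : (0 : F) ≠ 2 := two_ne_zero.symm
  have two_ne_half : (2 : F) ≠ 2⁻¹ := fun h ↦ three_ne_zero (α := F) <| by
    field_simp at h
    linear_combination h
  simp only [Matrix.vecCons, Fin.cons_injective_iff]
  refine ⟨?_, ?_, ?_, ?_, Function.injective_of_subsingleton _⟩ <;>
    simp [one_ne_two, one_ne_two.symm, zero_ne_two, two_ne_half]

end

theorem highwater_eigenspace_decomposition_general [NeZero (2 : F)] [NeZero (3 : F)] (i : ℤ) :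
    DirectSum.IsInternal
      (![(hwAd F i).eigenspace 1, (hwAd F i).eigenspace 0, (hwAd F i).eigenspace 2,
        (hwAd F i).eigenspace (2 : F)⁻¹] : Fin 4 → Submodule F (HW F)) ∧
    (hwAd F i).eigenspace 1 = Submodule.span F {hwa F i} := by
  set E : Fin 4 → Submodule F (HW F) := ![(hwAd F i).eigenspace 1, (hwAd F i).eigenspace 0,
    (hwAd F i).eigenspace 2, (hwAd F i).eigenspace 2⁻¹]
  have independent : iSupIndep E := by
    convert (hwAd F i).eigenspaces_iSupIndep.comp injective_one_zero_two_half using 1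
    ext1 j
    fin_cases j <;> rfl
  have spanning : iSup E = ⊤ := by
    rw [← span_hwa_sup_eigenspaces_eq_top i, ← eigenspace_one_eq_span_hwa]
    simp only [E, iSup, Matrix.range_cons, Matrix.range_empty, Set.union_empty,
      Set.singleton_union, sSup_insert, sSup_singleton, sup_assoc]
  exact ⟨DirectSum.isInternal_submodule_of_iSupIndep_of_iSup_eq_top independent spanning,
    eigenspace_one_eq_span_hwa i⟩

theorem highwater_eigenspace_decomposition
    (h2 : ringChar F ≠ 2) (h3 : ringChar F ≠ 3) :
    DirectSum.IsInternal
      (![hwEig F 1, hwEig F 0, hwEig F 2, hwEig F (2 : F)⁻¹] : Fin 4 → Submodule F (HW F)) ∧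
    hwEig F 1 = Submodule.span F {hwa F 0} := by
  have : NeZero (2 : F) := ⟨Ring.two_ne_zero h2⟩
  have : NeZero (3 : F) := ⟨mod_cast CharP.cast_ne_zero_of_ne_of_prime F Nat.prime_three h3⟩
  simpa only [hwEig_eq_eigenspace] using highwater_eigenspace_decomposition_general F 0
end

section
/- Let F be a field with char F ∉ {2, 3}. In the Highwater algebra H over F, let E_μ = {x ∈ H : a_0·x = μx} denote the μ-eigenspace of left multiplication by a_0. Then the eigenspaces satisfy the fusion law M(2, 1/2): E_1·E_1 ⊆ E_1, E_1·E_0 = 0, E_1·E_2 ⊆ E_2, E_1·E_{1/2} ⊆ E_{1/2}, E_0·E_0 ⊆ E_0, E_0·E_2 ⊆ E_2, E_0·E_{1/2} ⊆ E_{1/2}, E_2·E_2 ⊆ E_1 + E_0, E_2·E_{1/2} ⊆ E_{1/2}, and E_{1/2}·E_{1/2} ⊆ E_1 + E_0 + E_2. -/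
variable (F : Type*) [Field F]

/-!
With `b_j = a_j + a_{-j} - 2 a_0`, the axis `a_0` stabilises each span of `b_j` and `s_j`, which
yields the eigenvectors `z_j = 3 b_j - 4 s_j` for `0` and `t_j = b_j + 4 s_j` for `2`; together with
`a_0` for `1` and `a_j - a_{-j}` for `1/2` they span the algebra. Writing
`D v j k = 2 (v_j + v_k) - (v_{j-k} + v_{j+k})`, the products are `z_j z_k = 3 D z j k`,
`z_j t_k = -3 D t j k` and `t_j t_k = -D z j k`, which are the fusion rules among `0` and `2`. The
rules involving `1/2` need no computation: the automorphism `a_j ↦ a_{-j}`, `s_j ↦ s_j` fixes `a_0`,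
`z_j`, `t_j` and negates `a_j - a_{-j}`, so it grades the algebra by `ℤ/2`.
-/

/-- The failure of `v : G → M` to satisfy the parallelogram law at `(j, k)`. All structure constants
of the `τ`-even part of the Highwater algebra are expressed through it. -/
def parallelogramDefect {G M : Type*} [AddGroup G] [AddCommGroup M] (v : G → M) (j k : G) : M :=
  2 • (v j + v k) - (v (j - k) + v (j + k))

lemma parallelogramDefect_mem {G M S : Type*} [AddGroup G] [AddCommGroup M] [SetLike S M]
    [AddSubgroupClass S M] {W : S} {v : G → M} (hv : ∀ j, v j ∈ W) (j k : G) :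
    parallelogramDefect v j k ∈ W :=
  sub_mem (nsmul_mem (add_mem (hv j) (hv k)) 2) (add_mem (hv _) (hv _))

lemma parallelogramDefect_neg_right {G M : Type*} [AddGroup G] [AddCommGroup M] {v : G → M}
    (hv : ∀ j, v (-j) = v j) (j k : G) :
    parallelogramDefect v j (-k) = parallelogramDefect v j k := by
  rw [parallelogramDefect, parallelogramDefect, hv, sub_neg_eq_add, ← sub_eq_add_neg,
    add_comm (v (j - k))]

lemma parallelogramDefect_zero_right {G M : Type*} [AddGroup G] [AddCommGroup M] {v : G → M}
    (hv : v 0 = 0) (j : G) : parallelogramDefect v j 0 = 0 := by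
  rw [parallelogramDefect, hv, sub_zero, add_zero, add_zero, two_nsmul, sub_self]

lemma parallelogramDefect_comm {G M : Type*} [AddCommGroup G] [AddCommGroup M] {v : G → M}
    (hv : ∀ j, v (-j) = v j) (j k : G) :
    parallelogramDefect v j k = parallelogramDefect v k j := by
  rw [parallelogramDefect, parallelogramDefect, add_comm (v j), add_comm j k, ← hv (j - k), neg_sub]

lemma apply_apply_mem_of_eq_smul_parallelogramDefect {R G M N P : Type*} [CommRing R] [AddGroup G]
    [AddCommGroup M] [Module R M] [AddCommGroup N] [Module R N] [AddCommGroup P] [Module R P]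
    {B : M →ₗ[R] N →ₗ[R] P} {u : G → M} {v : G → N} {w : G → P} {c : R}
    (hB : ∀ j k, B (u j) (v k) = c • parallelogramDefect w j k) {W : Submodule R P}
    (hw : ∀ j, w j ∈ W) {x : M} {y : N} (hx : x ∈ Submodule.span R (Set.range u))
    (hy : y ∈ Submodule.span R (Set.range v)) : B x y ∈ W := by
  refine LinearMap.BilinMap.apply_apply_mem_of_mem_span W _ _ B ?_ x y hx hy
  rintro _ ⟨j, rfl⟩ _ ⟨k, rfl⟩
  exact hB j k ▸ W.smul_mem c (parallelogramDefect_mem hw j k)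

lemma natCast_ne_zero_of_ringChar_ne {R : Type*} [NonAssocSemiring R] [Nontrivial R] {p : ℕ}
    (hp : p.Prime) (h : ringChar R ≠ p) : (p : R) ≠ 0 := fun hp0 =>
  ((Nat.dvd_prime hp).1 (ringChar.dvd hp0)).elim CharP.ringChar_ne_one h

lemma hwBM_comm (i j : ℤ ⊕ ℕ) : hwBM F i j = hwBM F j i := by
  rcases i with i | m <;> rcases j with j | n
  · rw [hwBM, hwBM, add_comm (hwa F i), ← Int.natAbs_neg, neg_sub]
  · rfl
  · rfl
  · rw [hwBM, hwBM, add_comm (hws F (m + 1)), add_comm m n, ← Int.natAbs_neg, neg_sub]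

lemma hwMul_comm (x y : HW F) : hwMul F x y = hwMul F y x := by
  simp only [hwMul, Finsupp.sum_comm x y, hwBM_comm F, mul_comm]

/-- The multiplication of the Highwater algebra as a bilinear map, written `x ⋆ y`. -/
noncomputable def hwMulBilin : HW F →ₗ[F] HW F →ₗ[F] HW F :=
  LinearMap.mk₂ F (hwMul F)
    (fun x y z => by simp only [hwMul_comm F _ z, hwMul_add])
    (fun c x y => by simp only [hwMul_comm F _ y, hwMul_smul])
    (hwMul_add F) (hwMul_smul F)

local infix:70 " ⋆ " => hwMulBilin _

lemma hwEig_eq_eigenspace_s4 (μ : F) :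
    hwEig F μ = Module.End.eigenspace (hwMulBilin F (hwa F 0)) μ := by
  ext x
  rw [Module.End.mem_eigenspace_iff]
  rfl

/-- The elements `s_j`, extended to all integers by `s_{-j} = s_j`. -/
noncomputable def hwsInt (j : ℤ) : HW F := hws F j.natAbs

/-- The element `b_j = a_j + a_{-j} - 2 a_0`. The span of `b_j` and `s_j` is stable under `a_0`,
which acts on it with eigenvalues `0` and `2`. -/
noncomputable def hwb (j : ℤ) : HW F := hwa F j + hwa F (-j) - (2 : F) • hwa F 0

/-- The `0`-eigenvector `3 b_j - 4 s_j` of `a_0`. -/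
noncomputable def hwZeroVec (j : ℤ) : HW F := (3 : F) • hwb F j - (4 : F) • hwsInt F j

/-- The `2`-eigenvector `b_j + 4 s_j` of `a_0`. -/
noncomputable def hwTwoVec (j : ℤ) : HW F := hwb F j + (4 : F) • hwsInt F j

/-- The `1/2`-eigenvector `a_j - a_{-j}` of `a_0`. -/
noncomputable def hwHalfVec (j : ℤ) : HW F := hwa F j - hwa F (-j)

/-- The Miyamoto involution `τ` of the axis `a_0`: the automorphism with `a_j ↦ a_{-j}` and
`s_j ↦ s_j`. -/
noncomputable def hwMiyamoto : Module.End F (HW F) :=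
  Finsupp.lmapDomain F F (Sum.map Neg.neg id)

variable {F}

lemma hwsInt_zero : hwsInt F 0 = 0 := rfl

lemma hwsInt_neg (j : ℤ) : hwsInt F (-j) = hwsInt F j := by
  rw [hwsInt, Int.natAbs_neg, hwsInt]

lemma hwb_neg (j : ℤ) : hwb F (-j) = hwb F j := by
  rw [hwb, neg_neg, add_comm (hwa F (-j)), hwb]

lemma hwMulBilin_comm (x y : HW F) : x ⋆ y = y ⋆ x := hwMul_comm F x y

lemma hwMulBilin_single (i j : ℤ ⊕ ℕ) :
    Finsupp.single i 1 ⋆ Finsupp.single j 1 = hwBM F i j := by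
  simp [hwMulBilin, hwMul]

lemma four_ne_zero_of_two_ne_zero (h2 : (2 : F) ≠ 0) : (4 : F) ≠ 0 := by
  convert pow_ne_zero 2 h2 using 1
  norm_num

lemma eight_ne_zero_of_two_ne_zero (h2 : (2 : F) ≠ 0) : (8 : F) ≠ 0 := by
  convert pow_ne_zero 3 h2 using 1
  norm_num

lemma hwa_mul_hwa (i j : ℤ) :
    hwa F i ⋆ hwa F j = ((1 : F) / 2) • (hwa F i + hwa F j) + hwsInt F (i - j) :=
  hwMulBilin_single _ _

lemma hwa_mul_hwsInt (h2 : (2 : F) ≠ 0) (i j : ℤ) :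
    hwa F i ⋆ hwsInt F j
      = (-(3 : F) / 4) • hwa F i + ((3 : F) / 8) • (hwa F (i - j) + hwa F (i + j))
        + ((3 : F) / 2) • hwsInt F j := by
  have h4 := four_ne_zero_of_two_ne_zero h2
  have h8 := eight_ne_zero_of_two_ne_zero h2
  induction j using Int.negInduction with
  | nat n =>
    cases n with
    | zero =>
      simp only [Nat.cast_zero, hwsInt_zero, map_zero, sub_zero, add_zero]
      match_scalars
      field_simp
      ring
    | succ n => exact hwMulBilin_single (Sum.inl i) (Sum.inr n)
  | neg ih n => rw [hwsInt_neg, sub_neg_eq_add, ← sub_eq_add_neg, add_comm (hwa F (i + _)), ih n]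

lemma hwsInt_mul_hwsInt (h2 : (2 : F) ≠ 0) (j k : ℤ) :
    hwsInt F j ⋆ hwsInt F k = ((3 : F) / 8) • parallelogramDefect (hwsInt F) j k := by
  have h4 := four_ne_zero_of_two_ne_zero h2
  have h8 := eight_ne_zero_of_two_ne_zero h2
  have mul_zero (j : ℤ) :
      hwsInt F j ⋆ hwsInt F 0 = ((3 : F) / 8) • parallelogramDefect (hwsInt F) j 0 := by
    rw [parallelogramDefect_zero_right (hwsInt_zero), hwsInt_zero, map_zero, smul_zero]
  have mul_comm (j k : ℤ) := hwMulBilin_comm (hwsInt F j) (hwsInt F k)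
  have defect_comm (j k : ℤ) := parallelogramDefect_comm (hwsInt_neg (F := F)) j k
  have defect_neg (j k : ℤ) := parallelogramDefect_neg_right (hwsInt_neg (F := F)) j k
  induction k using Int.negInduction with
  | nat n =>
    induction j using Int.negInduction with
    | nat m =>
      rcases n with _ | n
      · exact mul_zero m
      rcases m with _ | m
      · rw [mul_comm, defect_comm]
        exact mul_zero _
      refine (hwMulBilin_single (Sum.inr m) (Sum.inr n)).trans ?_
      have hsub : (m : ℤ) - n = (m + 1 : ℕ) - (n + 1 : ℕ) := by push_cast; ring
      have hadd : m + n + 2 = ((m + 1 : ℕ) + (n + 1 : ℕ) : ℤ).natAbs := by omega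
      rw [parallelogramDefect, hwBM, hsub, hadd]
      change _ = ((3 : F) / 8) • (2 • (hws F (m + 1) + hws F (n + 1))
        - (hws F _ + hws F _))
      match_scalars <;> field_simp <;> ring
    | neg ih m => rw [hwsInt_neg, ih, defect_comm (-m), defect_neg, defect_comm]
  | neg ih n => rw [hwsInt_neg, defect_neg, ih]

lemma hwa_zero_mul_hwb (h2 : (2 : F) ≠ 0) (j : ℤ) :
    hwa F 0 ⋆ hwb F j = ((1 : F) / 2) • hwb F j + (2 : F) • hwsInt F j := by
  simp only [hwb, map_add, map_sub, map_smul, hwa_mul_hwa, hwsInt_zero, hwsInt_neg, zero_sub,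
    sub_zero, sub_neg_eq_add, zero_add]
  match_scalars <;> field_simp <;> ring

lemma hwa_zero_mul_hwsInt (h2 : (2 : F) ≠ 0) (j : ℤ) :
    hwa F 0 ⋆ hwsInt F j = ((3 : F) / 8) • hwb F j + ((3 : F) / 2) • hwsInt F j := by
  have h4 := four_ne_zero_of_two_ne_zero h2
  have h8 := eight_ne_zero_of_two_ne_zero h2
  rw [hwa_mul_hwsInt h2, hwb, zero_sub, zero_add]
  match_scalars <;> field_simp
  ring

lemma hwb_mul_hwsInt (h2 : (2 : F) ≠ 0) (j k : ℤ) :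
    hwb F j ⋆ hwsInt F k = (-(3 : F) / 8) • parallelogramDefect (hwb F) j k := by
  have h4 := four_ne_zero_of_two_ne_zero h2
  have h8 := eight_ne_zero_of_two_ne_zero h2
  simp only [hwb, parallelogramDefect, map_add, map_sub, map_smul, LinearMap.add_apply,
    LinearMap.sub_apply, LinearMap.smul_apply, hwa_mul_hwsInt h2, zero_sub, zero_add, neg_sub,
    neg_add', neg_add_eq_sub]
  match_scalars <;> field_simp <;> ring

lemma hwb_mul_hwb (h2 : (2 : F) ≠ 0) (j k : ℤ) :
    hwb F j ⋆ hwb F k = (-2 : F) • parallelogramDefect (hwsInt F) j k := by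
  have neg_sub_left : hwsInt F (-j - k) = hwsInt F (j + k) := by rw [← neg_add', hwsInt_neg]
  have sub_comm : hwsInt F (k - j) = hwsInt F (j - k) := by rw [← neg_sub, hwsInt_neg]
  simp only [hwb, parallelogramDefect, map_add, map_sub, map_smul, LinearMap.add_apply,
    LinearMap.sub_apply, LinearMap.smul_apply, hwa_mul_hwa, hwsInt_zero, hwsInt_neg, zero_sub,
    sub_zero, sub_neg_eq_add, neg_add_eq_sub, zero_add, neg_sub_left, sub_comm]
  match_scalars <;> field_simp <;> ring

lemma hwsInt_mul_hwb (h2 : (2 : F) ≠ 0) (j k : ℤ) :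
    hwsInt F j ⋆ hwb F k = (-(3 : F) / 8) • parallelogramDefect (hwb F) j k := by
  rw [hwMulBilin_comm, hwb_mul_hwsInt h2, parallelogramDefect_comm hwb_neg]

lemma hwa_zero_mem_hwEig_one (h2 : (2 : F) ≠ 0) : hwa F 0 ∈ hwEig F 1 := by
  change hwa F 0 ⋆ hwa F 0 = (1 : F) • hwa F 0
  rw [hwa_mul_hwa, sub_zero, hwsInt_zero]
  match_scalars
  field_simp
  ring

lemma hwZeroVec_mem_hwEig_zero (h2 : (2 : F) ≠ 0) (j : ℤ) : hwZeroVec F j ∈ hwEig F 0 := by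
  have h8 := eight_ne_zero_of_two_ne_zero h2
  change hwa F 0 ⋆ hwZeroVec F j = (0 : F) • hwZeroVec F j
  rw [hwZeroVec, map_sub, map_smul, map_smul, hwa_zero_mul_hwb h2, hwa_zero_mul_hwsInt h2]
  match_scalars <;> field_simp <;> ring

lemma hwTwoVec_mem_hwEig_two (h2 : (2 : F) ≠ 0) (j : ℤ) : hwTwoVec F j ∈ hwEig F 2 := by
  have h8 := eight_ne_zero_of_two_ne_zero h2
  change hwa F 0 ⋆ hwTwoVec F j = (2 : F) • hwTwoVec F j
  rw [hwTwoVec, map_add, map_smul, hwa_zero_mul_hwb h2, hwa_zero_mul_hwsInt h2]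
  match_scalars <;> field_simp <;> ring

lemma hwHalfVec_mem_hwEig_half (h2 : (2 : F) ≠ 0) (j : ℤ) :
    hwHalfVec F j ∈ hwEig F (2 : F)⁻¹ := by
  change hwa F 0 ⋆ hwHalfVec F j = (2 : F)⁻¹ • hwHalfVec F j
  simp only [hwHalfVec, map_sub, hwa_mul_hwa, zero_sub, hwsInt_neg]
  match_scalars <;> field_simp <;> ring

lemma hwZeroVec_mul_hwZeroVec (h2 : (2 : F) ≠ 0) (j k : ℤ) :
    hwZeroVec F j ⋆ hwZeroVec F k = (3 : F) • parallelogramDefect (hwZeroVec F) j k := by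
  have h8 := eight_ne_zero_of_two_ne_zero h2
  simp only [hwZeroVec, map_sub, map_smul, LinearMap.sub_apply, LinearMap.smul_apply,
    hwb_mul_hwb h2, hwb_mul_hwsInt h2, hwsInt_mul_hwb h2, hwsInt_mul_hwsInt h2]
  simp only [parallelogramDefect, hwZeroVec]
  match_scalars <;> field_simp <;> ring

lemma hwZeroVec_mul_hwTwoVec (h2 : (2 : F) ≠ 0) (j k : ℤ) :
    hwZeroVec F j ⋆ hwTwoVec F k = (-3 : F) • parallelogramDefect (hwTwoVec F) j k := by
  have h8 := eight_ne_zero_of_two_ne_zero h2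
  simp only [hwZeroVec, hwTwoVec, map_add, map_smul, LinearMap.sub_apply, LinearMap.smul_apply,
    map_sub, hwb_mul_hwb h2, hwb_mul_hwsInt h2, hwsInt_mul_hwb h2, hwsInt_mul_hwsInt h2]
  simp only [parallelogramDefect, hwTwoVec]
  match_scalars <;> field_simp <;> ring

lemma hwTwoVec_mul_hwTwoVec (h2 : (2 : F) ≠ 0) (j k : ℤ) :
    hwTwoVec F j ⋆ hwTwoVec F k = (-1 : F) • parallelogramDefect (hwZeroVec F) j k := by
  have h8 := eight_ne_zero_of_two_ne_zero h2
  simp only [hwTwoVec, map_add, map_smul, LinearMap.add_apply, LinearMap.smul_apply,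
    hwb_mul_hwb h2, hwb_mul_hwsInt h2, hwsInt_mul_hwb h2, hwsInt_mul_hwsInt h2]
  simp only [parallelogramDefect, hwZeroVec]
  match_scalars <;> field_simp <;> ring

lemma hwsInt_eq_smul_sub (h2 : (2 : F) ≠ 0) (j : ℤ) :
    hwsInt F j = (16 : F)⁻¹ • ((3 : F) • hwTwoVec F j - hwZeroVec F j) := by
  have h16 : (16 : F) ≠ 0 := by convert pow_ne_zero 4 h2 using 1; norm_num
  rw [hwZeroVec, hwTwoVec]
  match_scalars <;> field_simp <;> ring

lemma hwa_eq_add_smul_add_smul (h2 : (2 : F) ≠ 0) (j : ℤ) :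
    hwa F j = hwa F 0 + (8 : F)⁻¹ • (hwZeroVec F j + hwTwoVec F j) + (2 : F)⁻¹ • hwHalfVec F j := by
  have h8 := eight_ne_zero_of_two_ne_zero h2
  rw [hwZeroVec, hwTwoVec, hwHalfVec, hwb]
  match_scalars <;> field_simp <;> ring

lemma eq_top_of_hwa_mem_of_hwsInt_mem {W : Submodule F (HW F)} (ha : ∀ j, hwa F j ∈ W)
    (hs : ∀ j, hwsInt F j ∈ W) : W = ⊤ := by
  rw [eq_top_iff, ← Finsupp.basisSingleOne.span_eq, Submodule.span_le]
  rintro _ ⟨j | n, rfl⟩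
  · rw [SetLike.mem_coe, Finsupp.coe_basisSingleOne]
    exact ha j
  · rw [SetLike.mem_coe, Finsupp.coe_basisSingleOne]
    exact hs (n + 1)

open Submodule in
lemma span_eigenvectors_eq_top (h2 : (2 : F) ≠ 0) :
    span F {hwa F 0} ⊔ span F (Set.range (hwZeroVec F)) ⊔ span F (Set.range (hwTwoVec F))
      ⊔ span F (Set.range (hwHalfVec F)) = ⊤ := by
  set W := span F {hwa F 0} ⊔ span F (Set.range (hwZeroVec F)) ⊔ span F (Set.range (hwTwoVec F))
    ⊔ span F (Set.range (hwHalfVec F))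
  have one_mem : hwa F 0 ∈ W :=
    mem_sup_left (mem_sup_left (mem_sup_left (mem_span_singleton_self _)))
  have zero_mem (j : ℤ) : hwZeroVec F j ∈ W :=
    mem_sup_left (mem_sup_left (mem_sup_right (subset_span ⟨j, rfl⟩)))
  have two_mem (j : ℤ) : hwTwoVec F j ∈ W := mem_sup_left (mem_sup_right (subset_span ⟨j, rfl⟩))
  have half_mem (j : ℤ) : hwHalfVec F j ∈ W := mem_sup_right (subset_span ⟨j, rfl⟩)
  have a_mem (j : ℤ) : hwa F j ∈ W := by
    rw [hwa_eq_add_smul_add_smul h2]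
    exact add_mem (add_mem one_mem (W.smul_mem _ (add_mem (zero_mem j) (two_mem j))))
      (W.smul_mem _ (half_mem j))
  have s_mem (j : ℤ) : hwsInt F j ∈ W := by
    rw [hwsInt_eq_smul_sub h2]
    exact W.smul_mem _ (sub_mem (W.smul_mem _ (two_mem j)) (zero_mem j))
  exact eq_top_of_hwa_mem_of_hwsInt_mem a_mem s_mem

lemma hwEig_eq_span (h2 : (2 : F) ≠ 0) (h3 : (3 : F) ≠ 0) :
    hwEig F 1 = Submodule.span F {hwa F 0} ∧
      hwEig F 0 = Submodule.span F (Set.range (hwZeroVec F)) ∧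
      hwEig F 2 = Submodule.span F (Set.range (hwTwoVec F)) ∧
      hwEig F (2 : F)⁻¹ = Submodule.span F (Set.range (hwHalfVec F)) := by
  let μ : Fin 4 → F := ![1, 0, 2, 2⁻¹]
  let W : Fin 4 → Submodule F (HW F) := ![.span F {hwa F 0}, .span F (Set.range (hwZeroVec F)),
    .span F (Set.range (hwTwoVec F)), .span F (Set.range (hwHalfVec F))]
  have μ_injective : Function.Injective μ := by
    have two_ne_one : (2 : F) ≠ 1 := fun h => one_ne_zero (α := F) (by linear_combination h)
    have half_ne_two : (2 : F)⁻¹ ≠ 2 := fun h =>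
      h3 (by linear_combination -2 * h + mul_inv_cancel₀ h2)
    intro i j h
    fin_cases i <;> fin_cases j <;> simp_all [μ, eq_comm]
  have indep : iSupIndep fun i => hwEig F (μ i) := by
    simp only [hwEig_eq_eigenspace_s4]
    exact (Module.End.eigenspaces_iSupIndep _).comp μ_injective
  have W_le : W ≤ fun i => hwEig F (μ i) := by
    intro i
    fin_cases i
    · exact (Submodule.span_singleton_le_iff_mem _ _).2 (hwa_zero_mem_hwEig_one h2)
    · exact Submodule.span_le.2 (Set.range_subset_iff.2 (hwZeroVec_mem_hwEig_zero h2))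
    · exact Submodule.span_le.2 (Set.range_subset_iff.2 (hwTwoVec_mem_hwEig_two h2))
    · exact Submodule.span_le.2 (Set.range_subset_iff.2 (hwHalfVec_mem_hwEig_half h2))
  have W_top : ⨆ i, W i = ⊤ := eq_top_iff.2 <| (span_eigenvectors_eq_top h2).ge.trans <|
    sup_le (sup_le (sup_le (le_iSup W 0) (le_iSup W 1)) (le_iSup W 2)) (le_iSup W 3)
  have W_eq := (indep.le_iff_eq_of_iSup_eq_top W_top).1 W_le
  exact ⟨(congrFun W_eq 0).symm, (congrFun W_eq 1).symm, (congrFun W_eq 2).symm,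
    (congrFun W_eq 3).symm⟩

lemma hwMiyamoto_hwa (j : ℤ) : hwMiyamoto F (hwa F j) = hwa F (-j) := by
  simp [hwMiyamoto, hwa]

lemma hwMiyamoto_hws (j : ℕ) : hwMiyamoto F (hws F j) = hws F j := by
  cases j <;> simp [hwMiyamoto, hws]

lemma hwMiyamoto_single (i : ℤ ⊕ ℕ) :
    hwMiyamoto F (Finsupp.single i 1) = Finsupp.single (i.map Neg.neg id) 1 :=
  Finsupp.mapDomain_single

lemma hwMiyamoto_hwBM (i j : ℤ ⊕ ℕ) :
    hwMiyamoto F (hwBM F i j) = hwBM F (i.map Neg.neg id) (j.map Neg.neg id) := by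
  rcases i with i | m <;> rcases j with j | n <;>
    simp only [hwBM, Sum.map_inl, Sum.map_inr, id, map_add, map_sub, map_smul, hwMiyamoto_hwa,
      hwMiyamoto_hws]
  · rw [neg_sub_neg, ← Int.natAbs_neg, neg_sub]
  · rw [neg_sub', sub_neg_eq_add, neg_add', add_comm (hwa F (-i + _))]
  · rw [neg_sub', sub_neg_eq_add, neg_add', add_comm (hwa F (-j + _))]

lemma hwMiyamoto_mul (x y : HW F) : hwMiyamoto F (x ⋆ y) = hwMiyamoto F x ⋆ hwMiyamoto F y := by
  suffices (hwMulBilin F).compr₂ (hwMiyamoto F) =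
      (hwMulBilin F).compl₁₂ (hwMiyamoto F) (hwMiyamoto F) from
    LinearMap.congr_fun₂ this x y
  refine Finsupp.lhom_ext' fun i => LinearMap.ext_ring <|
    Finsupp.lhom_ext' fun j => LinearMap.ext_ring ?_
  change hwMiyamoto F (Finsupp.single i 1 ⋆ Finsupp.single j 1) =
    hwMiyamoto F (Finsupp.single i 1) ⋆ hwMiyamoto F (Finsupp.single j 1)
  rw [hwMulBilin_single, hwMiyamoto_single, hwMiyamoto_single, hwMulBilin_single, hwMiyamoto_hwBM]

lemma mul_mem_eigenspace_hwMiyamoto {ε δ : F} {x y : HW F}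
    (hx : x ∈ (hwMiyamoto F).eigenspace ε) (hy : y ∈ (hwMiyamoto F).eigenspace δ) :
    x ⋆ y ∈ (hwMiyamoto F).eigenspace (ε * δ) := by
  rw [Module.End.mem_eigenspace_iff] at hx hy ⊢
  rw [hwMiyamoto_mul, hx, hy, map_smul, map_smul, LinearMap.smul_apply, smul_smul, mul_comm]

lemma hwMiyamoto_hwb (j : ℤ) : hwMiyamoto F (hwb F j) = hwb F j := by
  simp only [hwb, map_sub, map_add, map_smul, hwMiyamoto_hwa, neg_neg, neg_zero,
    add_comm (hwa F j)]

lemma hwMiyamoto_hwZeroVec (j : ℤ) : hwMiyamoto F (hwZeroVec F j) = hwZeroVec F j := by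
  rw [hwZeroVec, map_sub, map_smul, map_smul, hwMiyamoto_hwb, hwsInt, hwMiyamoto_hws]

lemma hwMiyamoto_hwTwoVec (j : ℤ) : hwMiyamoto F (hwTwoVec F j) = hwTwoVec F j := by
  rw [hwTwoVec, map_add, map_smul, hwMiyamoto_hwb, hwsInt, hwMiyamoto_hws]

lemma hwMiyamoto_hwHalfVec (j : ℤ) : hwMiyamoto F (hwHalfVec F j) = -hwHalfVec F j := by
  rw [hwHalfVec, map_sub, hwMiyamoto_hwa, hwMiyamoto_hwa, neg_neg, neg_sub]

lemma eq_and_eq_of_le_of_disjoint_of_codisjoint {α : Type*} [Lattice α] [BoundedOrder α]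
    [IsModularLattice α] {a b a' b' : α} (ha : a ≤ a') (hb : b ≤ b') (hdisj : Disjoint a' b')
    (hcodisj : Codisjoint a b) : a = a' ∧ b = b' :=
  ⟨eq_of_le_of_inf_le_of_sup_le ha ((hdisj.mono_right hb).le_bot.trans bot_le)
      (le_top.trans hcodisj.top_le),
    eq_of_le_of_inf_le_of_sup_le hb ((hdisj.symm.mono_right ha).le_bot.trans bot_le)
      (le_top.trans hcodisj.symm.top_le)⟩

lemma hwEig_eq_eigenspace_hwMiyamoto (h2 : (2 : F) ≠ 0) (h3 : (3 : F) ≠ 0) :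
    hwEig F 1 ⊔ hwEig F 0 ⊔ hwEig F 2 = (hwMiyamoto F).eigenspace 1 ∧
      hwEig F (2 : F)⁻¹ = (hwMiyamoto F).eigenspace (-1) := by
  obtain ⟨one_eq, zero_eq, two_eq, half_eq⟩ := hwEig_eq_span h2 h3
  rw [one_eq, zero_eq, two_eq, half_eq]
  refine eq_and_eq_of_le_of_disjoint_of_codisjoint (sup_le (sup_le ?_ ?_) ?_) ?_ ?_
    (codisjoint_iff.2 (span_eigenvectors_eq_top h2))
  · rw [Submodule.span_singleton_le_iff_mem, Module.End.mem_eigenspace_iff, hwMiyamoto_hwa,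
      neg_zero, one_smul]
  · refine Submodule.span_le.2 (Set.range_subset_iff.2 fun j => ?_)
    rw [SetLike.mem_coe, Module.End.mem_eigenspace_iff, hwMiyamoto_hwZeroVec, one_smul]
  · refine Submodule.span_le.2 (Set.range_subset_iff.2 fun j => ?_)
    rw [SetLike.mem_coe, Module.End.mem_eigenspace_iff, hwMiyamoto_hwTwoVec, one_smul]
  · refine Submodule.span_le.2 (Set.range_subset_iff.2 fun j => ?_)
    rw [SetLike.mem_coe, Module.End.mem_eigenspace_iff, hwMiyamoto_hwHalfVec, neg_one_smul]
  · exact (Module.End.eigenspaces_iSupIndep _).pairwiseDisjoint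
      fun h => h2 (by linear_combination h)

lemma exists_mul_eq_smul_of_mem_hwEig_one (h2 : (2 : F) ≠ 0) (h3 : (3 : F) ≠ 0) {x y : HW F}
    {μ : F} (hx : x ∈ hwEig F 1) (hy : y ∈ hwEig F μ) : ∃ c : F, x ⋆ y = (c * μ) • y := by
  rw [(hwEig_eq_span h2 h3).1] at hx
  obtain ⟨c, rfl⟩ := Submodule.mem_span_singleton.1 hx
  have axis_mul : hwa F 0 ⋆ y = μ • y := hy
  exact ⟨c, by rw [map_smul, LinearMap.smul_apply, axis_mul, smul_smul]⟩

lemma mul_mem_hwEig_of_mem_hwEig_one (h2 : (2 : F) ≠ 0) (h3 : (3 : F) ≠ 0) {x y : HW F} {μ : F}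
    (hx : x ∈ hwEig F 1) (hy : y ∈ hwEig F μ) : x ⋆ y ∈ hwEig F μ := by
  obtain ⟨c, hc⟩ := exists_mul_eq_smul_of_mem_hwEig_one h2 h3 hx hy
  exact hc ▸ Submodule.smul_mem _ _ hy

lemma mul_eq_zero_of_mem_hwEig_one_of_mem_hwEig_zero (h2 : (2 : F) ≠ 0) (h3 : (3 : F) ≠ 0)
    {x y : HW F} (hx : x ∈ hwEig F 1) (hy : y ∈ hwEig F 0) : x ⋆ y = 0 := by
  obtain ⟨c, hc⟩ := exists_mul_eq_smul_of_mem_hwEig_one h2 h3 hx hy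
  rw [hc, mul_zero, zero_smul]

lemma mul_mem_hwEig_zero_of_mem_hwEig_zero (h2 : (2 : F) ≠ 0) (h3 : (3 : F) ≠ 0) {x y : HW F}
    (hx : x ∈ hwEig F 0) (hy : y ∈ hwEig F 0) : x ⋆ y ∈ hwEig F 0 := by
  obtain ⟨-, zero_eq, -, -⟩ := hwEig_eq_span h2 h3
  exact apply_apply_mem_of_eq_smul_parallelogramDefect (hwZeroVec_mul_hwZeroVec h2)
    (hwZeroVec_mem_hwEig_zero h2) (zero_eq ▸ hx) (zero_eq ▸ hy)

lemma mul_mem_hwEig_two_of_mem_hwEig_zero (h2 : (2 : F) ≠ 0) (h3 : (3 : F) ≠ 0) {x y : HW F}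
    (hx : x ∈ hwEig F 0) (hy : y ∈ hwEig F 2) : x ⋆ y ∈ hwEig F 2 := by
  obtain ⟨-, zero_eq, two_eq, -⟩ := hwEig_eq_span h2 h3
  exact apply_apply_mem_of_eq_smul_parallelogramDefect (hwZeroVec_mul_hwTwoVec h2)
    (hwTwoVec_mem_hwEig_two h2) (zero_eq ▸ hx) (two_eq ▸ hy)

lemma mul_mem_hwEig_zero_of_mem_hwEig_two (h2 : (2 : F) ≠ 0) (h3 : (3 : F) ≠ 0) {x y : HW F}
    (hx : x ∈ hwEig F 2) (hy : y ∈ hwEig F 2) : x ⋆ y ∈ hwEig F 0 := by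
  obtain ⟨-, -, two_eq, -⟩ := hwEig_eq_span h2 h3
  exact apply_apply_mem_of_eq_smul_parallelogramDefect (hwTwoVec_mul_hwTwoVec h2)
    (hwZeroVec_mem_hwEig_zero h2) (two_eq ▸ hx) (two_eq ▸ hy)

lemma mul_mem_hwEig_half_of_mem_sup (h2 : (2 : F) ≠ 0) (h3 : (3 : F) ≠ 0) {x y : HW F}
    (hx : x ∈ hwEig F 1 ⊔ hwEig F 0 ⊔ hwEig F 2) (hy : y ∈ hwEig F (2 : F)⁻¹) :
    x ⋆ y ∈ hwEig F (2 : F)⁻¹ := by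
  obtain ⟨even_eq, half_eq⟩ := hwEig_eq_eigenspace_hwMiyamoto h2 h3
  rw [even_eq] at hx
  rw [half_eq] at hy ⊢
  simpa only [one_mul] using mul_mem_eigenspace_hwMiyamoto hx hy

lemma mul_mem_sup_of_mem_hwEig_half (h2 : (2 : F) ≠ 0) (h3 : (3 : F) ≠ 0) {x y : HW F}
    (hx : x ∈ hwEig F (2 : F)⁻¹) (hy : y ∈ hwEig F (2 : F)⁻¹) :
    x ⋆ y ∈ hwEig F 1 ⊔ hwEig F 0 ⊔ hwEig F 2 := by
  obtain ⟨even_eq, half_eq⟩ := hwEig_eq_eigenspace_hwMiyamoto h2 h3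
  rw [half_eq] at hx hy
  rw [even_eq]
  simpa only [neg_one_mul, neg_neg] using mul_mem_eigenspace_hwMiyamoto hx hy

variable (F)

theorem highwater_fusion_law (h2 : ringChar F ≠ 2) (h3 : ringChar F ≠ 3) :
    (∀ x ∈ hwEig F 1, ∀ y ∈ hwEig F 1, hwMul F x y ∈ hwEig F 1) ∧
    (∀ x ∈ hwEig F 1, ∀ y ∈ hwEig F 0, hwMul F x y = 0) ∧
    (∀ x ∈ hwEig F 1, ∀ y ∈ hwEig F 2, hwMul F x y ∈ hwEig F 2) ∧
    (∀ x ∈ hwEig F 1, ∀ y ∈ hwEig F (2 : F)⁻¹, hwMul F x y ∈ hwEig F (2 : F)⁻¹) ∧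
    (∀ x ∈ hwEig F 0, ∀ y ∈ hwEig F 0, hwMul F x y ∈ hwEig F 0) ∧
    (∀ x ∈ hwEig F 0, ∀ y ∈ hwEig F 2, hwMul F x y ∈ hwEig F 2) ∧
    (∀ x ∈ hwEig F 0, ∀ y ∈ hwEig F (2 : F)⁻¹, hwMul F x y ∈ hwEig F (2 : F)⁻¹) ∧
    (∀ x ∈ hwEig F 2, ∀ y ∈ hwEig F 2, hwMul F x y ∈ hwEig F 1 ⊔ hwEig F 0) ∧
    (∀ x ∈ hwEig F 2, ∀ y ∈ hwEig F (2 : F)⁻¹, hwMul F x y ∈ hwEig F (2 : F)⁻¹) ∧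
    (∀ x ∈ hwEig F (2 : F)⁻¹, ∀ y ∈ hwEig F (2 : F)⁻¹, hwMul F x y ∈ hwEig F 1 ⊔ hwEig F 0 ⊔ hwEig F 2) := by
  have two_ne : (2 : F) ≠ 0 := Ring.two_ne_zero h2
  have three_ne : (3 : F) ≠ 0 := mod_cast natCast_ne_zero_of_ringChar_ne Nat.prime_three h3
  exact ⟨
    fun _ hx _ hy => mul_mem_hwEig_of_mem_hwEig_one two_ne three_ne hx hy,
    fun _ hx _ hy => mul_eq_zero_of_mem_hwEig_one_of_mem_hwEig_zero two_ne three_ne hx hy,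
    fun _ hx _ hy => mul_mem_hwEig_of_mem_hwEig_one two_ne three_ne hx hy,
    fun _ hx _ hy => mul_mem_hwEig_of_mem_hwEig_one two_ne three_ne hx hy,
    fun _ hx _ hy => mul_mem_hwEig_zero_of_mem_hwEig_zero two_ne three_ne hx hy,
    fun _ hx _ hy => mul_mem_hwEig_two_of_mem_hwEig_zero two_ne three_ne hx hy,
    fun _ hx _ hy => mul_mem_hwEig_half_of_mem_sup two_ne three_ne
      (Submodule.mem_sup_left (Submodule.mem_sup_right hx)) hy,
    fun _ hx _ hy => Submodule.mem_sup_right <|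
      mul_mem_hwEig_zero_of_mem_hwEig_two two_ne three_ne hx hy,
    fun _ hx _ hy => mul_mem_hwEig_half_of_mem_sup two_ne three_ne
      (Submodule.mem_sup_right hx) hy,
    fun _ hx _ hy => mul_mem_sup_of_mem_hwEig_half two_ne three_ne hx hy⟩
end

section
/- Let F be a field with char F ≠ 2 and let H be the Highwater algebra over F. The F-linear map λ : H → F defined by λ(a_i) = 1 for all i ∈ ℤ and λ(s_j) = 0 for all j ≥ 1 satisfies λ(x·y) = λ(x)λ(y) for all x, y ∈ H (i.e., H is baric). Consequently, the symmetric bilinear form (x, y) := λ(x)λ(y) satisfies (x·y, z) = (x, y·z) for all x, y, z ∈ H, i.e., it is a Frobenius form on H. -/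
variable (F : Type*) [Field F]

theorem map_finsuppSum_smul_eq_linearCombination_mul {R ι κ M A : Type*} [Semiring R]
    [AddCommMonoid M] [Module R M] [NonUnitalNonAssocSemiring A] [Module R A]
    [IsScalarTower R A A] [SMulCommClass R A A] (φ : M →ₗ[R] A) {m : ι → κ → M}
    {u : ι → A} {v : κ → A} (hm : ∀ i j, φ (m i j) = u i * v j) (x : ι →₀ R) (y : κ →₀ R) :
    φ (x.sum fun i c => y.sum fun j d => (c * d) • m i j) =
      Finsupp.linearCombination R u x * Finsupp.linearCombination R v y := by
  simp only [Finsupp.linearCombination_apply, Finsupp.sum, map_sum, map_smul, hm,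
    Finset.sum_mul_sum, smul_mul_smul_comm]

/-- The weight map `λ` of the Highwater algebra, which makes it a baric algebra: `λ(a_i) = 1` and
`λ(s_j) = 0`, given by its values on the basis indexed by `ℤ ⊕ ℕ`. -/
noncomputable def hwWeight : HW F →ₗ[F] F :=
  Finsupp.linearCombination F (Sum.elim 1 0)

theorem hwWeight_hwa (i : ℤ) : hwWeight F (hwa F i) = 1 := by
  simp [hwWeight, hwa]

theorem hwWeight_hws (j : ℕ) : hwWeight F (hws F j) = 0 := by
  cases j <;> simp [hwWeight, hws]

theorem eq_hwWeight {lam : HW F →ₗ[F] F} (hla : ∀ i : ℤ, lam (hwa F i) = 1)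
    (hls : ∀ j : ℕ, 1 ≤ j → lam (hws F j) = 0) : lam = hwWeight F := by
  refine Finsupp.basisSingleOne.ext fun p => ?_
  rw [Finsupp.coe_basisSingleOne]
  rcases p with i | j
  · exact (hla i).trans (hwWeight_hwa F i).symm
  · exact (hls (j + 1) j.succ_pos).trans (hwWeight_hws F (j + 1)).symm

theorem hwWeight_hwBM (h2 : (2 : F) ≠ 0) (p q : ℤ ⊕ ℕ) :
    hwWeight F (hwBM F p q) =
      (Sum.elim 1 0 : ℤ ⊕ ℕ → F) p * (Sum.elim 1 0 : ℤ ⊕ ℕ → F) q := by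
  have weight_axis_mul_axis : (1 : F) / 2 * (1 + 1) = 1 := by
    rw [one_add_one_eq_two, one_div_mul_cancel h2]
  have weight_axis_mul_s : -(3 : F) / 4 + 3 / 8 * (1 + 1) = 0 := by
    rw [show (8 : F) = 4 * 2 by norm_num, one_add_one_eq_two, div_mul_eq_mul_div,
      mul_div_mul_right _ _ h2, neg_div, neg_add_cancel]
  rcases p with i | j <;> rcases q with k | l <;>
    simp only [hwBM, map_add, map_sub, map_smul, smul_eq_mul, hwWeight_hwa, hwWeight_hws,
      weight_axis_mul_axis, weight_axis_mul_s, Sum.elim_inl, Sum.elim_inr, Pi.one_apply,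
      Pi.zero_apply, mul_zero, mul_one, add_zero, sub_zero]

theorem hwWeight_hwMul (h2 : (2 : F) ≠ 0) (x y : HW F) :
    hwWeight F (hwMul F x y) = hwWeight F x * hwWeight F y :=
  map_finsuppSum_smul_eq_linearCombination_mul (hwWeight F) (hwWeight_hwBM F h2) x y

theorem highwater_baric (h2 : ringChar F ≠ 2) (lam : HW F →ₗ[F] F)
    (hla : ∀ i : ℤ, lam (hwa F i) = 1) (hls : ∀ j : ℕ, 1 ≤ j → lam (hws F j) = 0) :
    (∀ x y : HW F, lam (hwMul F x y) = lam x * lam y) ∧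
    (∀ x y z : HW F, lam (hwMul F x y) * lam z = lam x * lam (hwMul F y z)) := by
  obtain rfl := eq_hwWeight F hla hls
  have map_mul := hwWeight_hwMul F (Ring.two_ne_zero h2)
  refine ⟨map_mul, fun x y z => ?_⟩
  rw [map_mul, map_mul, mul_assoc]
end

section
/- Let F be a field with char F ≠ 2 and let H be the Highwater algebra over F. For each i ∈ ℤ, the F-linear map τ_i : H → H determined by τ_i(a_j) = a_{2i−j} for all j ∈ ℤ and τ_i(s_j) = s_j for all j ≥ 1 is an algebra automorphism of H satisfying τ_i ∘ τ_i = id. -/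
variable (F : Type*) [Field F]

/-! The products of basis elements involve the axis indices only through the distances `|i - k|` and
the unordered pairs `{i - j, i + j}` of points at distance `j` from `i`. Every isometry of `ℤ`
preserves both, hence acts on the algebra; `τ_i` comes from the reflection of `ℤ` about `i`. -/

theorem isometry_int_iff_natAbs_sub {f : ℤ → ℤ} :
    Isometry f ↔ ∀ j k, (f j - f k).natAbs = (j - k).natAbs := by
  simp only [isometry_iff_dist_eq, Int.dist_eq', Int.cast_inj, Int.abs_eq_natAbs, Nat.cast_inj]

/-- The linear endomorphism of the Highwater algebra induced by a map `f` of the indices of the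
axes: `a_j ↦ a_{f j}`, `s_j ↦ s_j`. The Miyamoto involution `τ_i` is the case `f j = 2i - j`. -/
noncomputable def hwMap (f : ℤ → ℤ) : HW F →ₗ[F] HW F :=
  Finsupp.lmapDomain F F (Sum.map f id)

theorem hwMap_hwa (f : ℤ → ℤ) (j : ℤ) : hwMap F f (hwa F j) = hwa F (f j) := by
  simp [hwMap, hwa]

theorem hwMap_hws (f : ℤ → ℤ) (j : ℕ) : hwMap F f (hws F j) = hws F j := by
  cases j <;> simp [hwMap, hws]

theorem hwMap_involutive {f : ℤ → ℤ} (hf : Function.Involutive f) :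
    Function.Involutive (hwMap F f) := fun x => by
  simp only [hwMap, Finsupp.lmapDomain_apply, ← Finsupp.mapDomain_comp, Sum.map_comp_map,
    hf.comp_self, Function.comp_id, Sum.map_id_id, Finsupp.mapDomain_id]

theorem hwa_sub_add_hwa_add_of_isometry {f : ℤ → ℤ} (hf : Isometry f) (j n : ℤ) :
    hwa F (f (j - n)) + hwa F (f (j + n)) = hwa F (f j - n) + hwa F (f j + n) := by
  have dist_eq := isometry_int_iff_natAbs_sub.mp hf
  have dist_left := dist_eq (j - n) j
  have dist_right := dist_eq (j + n) j
  have dist_ends := dist_eq (j - n) (j + n)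
  -- The images of `j ± n` are at distance `n` from `f j` and `2n` from each other.
  obtain ⟨left, right⟩ | ⟨left, right⟩ :
      (f (j - n) = f j - n ∧ f (j + n) = f j + n) ∨
        (f (j - n) = f j + n ∧ f (j + n) = f j - n) := by omega
  · rw [left, right]
  · rw [left, right, add_comm]

theorem hwMap_hwBM {f : ℤ → ℤ} (hf : Isometry f) (p q : ℤ ⊕ ℕ) :
    hwMap F f (hwBM F p q) = hwBM F (Sum.map f id p) (Sum.map f id q) := by
  rcases p with j | m <;> rcases q with k | n <;>
    simp only [hwBM, Sum.map_inl, Sum.map_inr, id_eq, map_add, map_sub, map_smul, hwMap_hwa,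
      hwMap_hws, hwa_sub_add_hwa_add_of_isometry F hf, isometry_int_iff_natAbs_sub.mp hf]

theorem mapDomain_hwMul {σ : ℤ ⊕ ℕ → ℤ ⊕ ℕ}
    (hσ : ∀ p q, Finsupp.mapDomain σ (hwBM F p q) = hwBM F (σ p) (σ q)) (x y : HW F) :
    Finsupp.mapDomain σ (hwMul F x y) =
      hwMul F (Finsupp.mapDomain σ x) (Finsupp.mapDomain σ y) := by
  simp only [hwMul, Finsupp.mapDomain_sum, Finsupp.mapDomain_smul, hσ]
  simp [Finsupp.sum_mapDomain_index, add_mul, mul_add, add_smul]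

theorem hwMap_hwMul {f : ℤ → ℤ} (hf : Isometry f) (x y : HW F) :
    hwMap F f (hwMul F x y) = hwMul F (hwMap F f x) (hwMap F f y) :=
  mapDomain_hwMul F (hwMap_hwBM F hf) x y

theorem highwater_miyamoto_involution (h2 : ringChar F ≠ 2) (i : ℤ) :
    ∃ T : HW F →ₗ[F] HW F,
      (∀ j : ℤ, T (hwa F j) = hwa F (2 * i - j)) ∧
      (∀ j : ℕ, 1 ≤ j → T (hws F j) = hws F j) ∧
      (∀ x y : HW F, T (hwMul F x y) = hwMul F (T x) (T y)) ∧
      (∀ x : HW F, T (T x) = x) := by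
  have reflection_isometry : Isometry (2 * i - · : ℤ → ℤ) :=
    (IsometryEquiv.subLeft (2 * i)).isometry
  have reflection_involutive : Function.Involutive (2 * i - · : ℤ → ℤ) := sub_sub_cancel (2 * i)
  exact ⟨hwMap F (2 * i - ·), hwMap_hwa F _, fun j _ => hwMap_hws F _ j,
    hwMap_hwMul F reflection_isometry, hwMap_involutive F reflection_involutive⟩
end

section
/- Let F be a field with char F ≠ 2 and let H be the Highwater algebra over F. For i ∈ ℤ let τ_i be the algebra automorphism of H with τ_i(a_j) = a_{2i−j} and τ_i(s_j) = s_j. Then the composition τ_0 ∘ τ_1 sends a_j to a_{j−2} for every j ∈ ℤ and has infinite order, and the subgroup of the automorphism group of H generated by {τ_i : i ∈ ℤ} equals the subgroup generated by τ_0 and τ_1 and is isomorphic to the infinite dihedral group. -/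
variable (F : Type*) [Field F]

/-!
On indices `τ_i` is the point reflection `j ↦ 2i - j` of `ℤ`, and point reflections satisfy
`τ_i τ_j τ_k = τ_{i-j+k}`. This single relation makes each `τ_i` an involution, lets `τ_0` and `τ_1`
generate every `τ_i`, and gives a homomorphism from the infinite dihedral group onto `⟨τ_i⟩`. The
homomorphism is injective because the `τ_i` are distinct, which is visible on the axis `a_0`.
-/

section ReflectionFamily

variable {A G : Type*} [AddGroup A] [Group G]

/-- A family of group elements multiplying like the point reflections `x ↦ 2i - x` of an abelian
group. Only the law for triple products is imposed: some `t i` may be trivial, and `t` need not be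
injective. -/
def IsReflectionFamily (t : A → G) : Prop :=
  ∀ i j k, t i * t j * t k = t (i - j + k)

namespace IsReflectionFamily

theorem mul_self {t : A → G} (ht : IsReflectionFamily t) (i : A) : t i * t i = 1 := by
  simpa using ht i i i

theorem ne_one {t : A → G} (ht : IsReflectionFamily t) (hinj : Function.Injective t) {x : A}
    (hx : x + x ≠ 0) (i : A) : t i ≠ 1 := fun hi => by
  have h_reflect : t (i + x - i + (i + x)) = t i := by
    rw [← ht, hi, mul_one, ht.mul_self]
  have h_index : i + (x + x) = i := by
    simpa [sub_eq_add_neg, add_assoc] using hinj h_reflect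
  exact hx (add_eq_left.mp h_index)

theorem apply_zsmul_mem_closure_pair {t : A → G} (ht : IsReflectionFamily t) (x : A) (m : ℤ) :
    t (m • x) ∈ Subgroup.closure {t 0, t x} := by
  have h_zero : t 0 ∈ Subgroup.closure {t 0, t x} := Subgroup.subset_closure (by simp)
  have h_gen : t x ∈ Subgroup.closure {t 0, t x} := Subgroup.subset_closure (by simp)
  induction m with
  | zero => simpa using h_zero
  | succ m ih =>
    have h_next : t ((m + 1 : ℤ) • x) = t x * t 0 * t ((m : ℤ) • x) := by
      rw [ht, sub_zero, add_comm (m : ℤ) 1, add_zsmul, one_zsmul]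
    exact h_next ▸ mul_mem (mul_mem h_gen h_zero) ih
  | pred m ih =>
    have h_prev : t ((-m - 1 : ℤ) • x) = t 0 * t x * t ((-m : ℤ) • x) := by
      rw [ht, zero_sub, sub_eq_neg_add, add_zsmul, neg_one_zsmul]
    exact h_prev ▸ mul_mem (mul_mem h_zero h_gen) ih

theorem closure_range_eq_closure_pair {t : A → G} (ht : IsReflectionFamily t) {x : A}
    (hx : ∀ i, i ∈ AddSubgroup.zmultiples x) :
    Subgroup.closure (Set.range t) = Subgroup.closure {t 0, t x} := by
  apply le_antisymm
  · rw [Subgroup.closure_le]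
    rintro _ ⟨i, rfl⟩
    obtain ⟨m, rfl⟩ := hx i
    exact ht.apply_zsmul_mem_closure_pair x m
  · exact Subgroup.closure_mono
      (Set.pair_subset (Set.mem_range_self 0) (Set.mem_range_self x))

variable {n : ℕ} {t : ZMod n → G}

/-- The homomorphism from the dihedral group defined by a family of reflections indexed by `ZMod n`;
it sends the reflection `sr i` to `t i`. -/
def dihedralLift (ht : IsReflectionFamily t) : DihedralGroup n →* G :=
  MonoidHom.mk'
    (fun
      | .r i => t 0 * t i
      | .sr i => t i)
    (by
      have h_rotate (i j : ZMod n) : t 0 * t i * t j = t (j - i) := by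
        rw [ht, zero_sub, neg_add_eq_sub]
      have h_add (i j : ZMod n) : t i * (t 0 * t j) = t (i + j) := by
        rw [← mul_assoc, ht, sub_zero]
      rintro (i | i) (j | j)
      · change t 0 * t (i + j) = t 0 * t i * (t 0 * t j)
        rw [mul_assoc, h_add]
      · exact (h_rotate i j).symm
      · exact (h_add i j).symm
      · change t 0 * t (j - i) = t i * t j
        rw [← h_rotate, ← mul_assoc, ← mul_assoc, ht.mul_self, one_mul])

theorem dihedralLift_r (ht : IsReflectionFamily t) (i : ZMod n) :
    ht.dihedralLift (.r i) = t 0 * t i := rfl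

theorem dihedralLift_sr (ht : IsReflectionFamily t) (i : ZMod n) :
    ht.dihedralLift (.sr i) = t i := rfl

theorem range_dihedralLift (ht : IsReflectionFamily t) :
    ht.dihedralLift.range = Subgroup.closure (Set.range t) := by
  apply le_antisymm
  · have h_mem (i : ZMod n) : t i ∈ Subgroup.closure (Set.range t) :=
      Subgroup.subset_closure (Set.mem_range_self i)
    rintro _ ⟨i | i, rfl⟩
    · exact mul_mem (h_mem 0) (h_mem i)
    · exact h_mem i
  · rw [Subgroup.closure_le]
    rintro _ ⟨i, rfl⟩
    exact ⟨.sr i, ht.dihedralLift_sr i⟩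

theorem dihedralLift_injective (ht : IsReflectionFamily t) (hinj : Function.Injective t)
    (hne : ∀ i, t i ≠ 1) : Function.Injective ht.dihedralLift := by
  rw [injective_iff_map_eq_one]
  rintro (i | i) hi
  · have h_eq : t 0 * t i = t 0 * t 0 := hi.trans (ht.mul_self 0).symm
    rw [hinj (mul_left_cancel h_eq), DihedralGroup.r_zero]
  · exact absurd hi (hne i)

theorem orderOf_mul (ht : IsReflectionFamily t) (hinj : Function.Injective t)
    (hne : ∀ i, t i ≠ 1) : orderOf (t 0 * t 1) = n := by
  rw [← ht.dihedralLift_r, orderOf_injective _ (ht.dihedralLift_injective hinj hne),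
    DihedralGroup.orderOf_r_one]

theorem nonempty_closure_mulEquiv_dihedralGroup (ht : IsReflectionFamily t)
    (hinj : Function.Injective t) (hne : ∀ i, t i ≠ 1) :
    Nonempty (Subgroup.closure (Set.range t) ≃* DihedralGroup n) := by
  rw [← ht.range_dihedralLift]
  exact ⟨(MonoidHom.ofInjective (ht.dihedralLift_injective hinj hne)).symm⟩

end IsReflectionFamily

end ReflectionFamily

section LinearReflections

theorem injective_of_apply_eq_two_mul_sub {X E : Type*} [FunLike E X X] {a : ℤ → X} {tau : ℤ → E}
    (ha : Function.Injective a) (hta : ∀ i j, tau i (a j) = a (2 * i - j)) :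
    Function.Injective tau := fun i j h => by
  have h_image : a (2 * i - 0) = a (2 * j - 0) := by rw [← hta, ← hta, h]
  simpa using ha h_image

variable {R M : Type*} [Semiring R] [AddCommMonoid M] [Module R M] {a : ℤ → M} {S : Set M}
  {tau : ℤ → (M ≃ₗ[R] M)}

theorem isReflectionFamily_of_apply_eq_two_mul_sub
    (hspan : Submodule.span R (Set.range a ∪ S) = ⊤)
    (hta : ∀ i j, tau i (a j) = a (2 * i - j)) (hts : ∀ i, ∀ s ∈ S, tau i s = s) :
    IsReflectionFamily tau := fun i j k => by
  apply LinearEquiv.toLinearMap_injective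
  apply LinearMap.ext_on hspan
  rintro _ (⟨l, rfl⟩ | hs)
  · simp only [LinearEquiv.coe_coe, LinearEquiv.mul_apply, hta]
    congr 1
    ring
  · simp only [LinearEquiv.coe_coe, LinearEquiv.mul_apply, hts _ _ hs]

theorem highwater_miyamoto_group_general (ha : Function.Injective a)
    (hspan : Submodule.span R (Set.range a ∪ S) = ⊤)
    (hta : ∀ i j, tau i (a j) = a (2 * i - j)) (hts : ∀ i, ∀ s ∈ S, tau i s = s) :
    (∀ j, (tau 0 * tau 1) (a j) = a (j - 2)) ∧
    ¬ IsOfFinOrder (tau 0 * tau 1) ∧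
    Subgroup.closure (Set.range tau) = Subgroup.closure {tau 0, tau 1} ∧
    Nonempty (Subgroup.closure (Set.range tau) ≃* DihedralGroup 0) := by
  have h_refl : IsReflectionFamily tau :=
    isReflectionFamily_of_apply_eq_two_mul_sub hspan hta hts
  have h_inj : Function.Injective tau := injective_of_apply_eq_two_mul_sub ha hta
  have h_ne : ∀ i, tau i ≠ 1 := h_refl.ne_one h_inj (x := 1) (by decide)
  -- `ZMod 0` unfolds to `ℤ`, so `tau` is also a family indexed by `ZMod 0`.
  have h_refl_zmod : IsReflectionFamily (A := ZMod 0) tau := h_refl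
  refine ⟨fun j => ?_, ?_, ?_, ?_⟩
  · rw [LinearEquiv.mul_apply, hta, hta]
    congr 1
    ring
  · exact orderOf_eq_zero_iff.mp (h_refl_zmod.orderOf_mul h_inj h_ne)
  · exact h_refl.closure_range_eq_closure_pair fun i => ⟨i, by simp⟩
  · exact h_refl_zmod.nonempty_closure_mulEquiv_dihedralGroup h_inj h_ne

end LinearReflections

theorem hwa_injective : Function.Injective (hwa F) :=
  (Finsupp.single_left_injective one_ne_zero).comp Sum.inl_injective

theorem span_range_hwa_union_image_hws :
    Submodule.span F (Set.range (hwa F) ∪ hws F '' Set.Ici 1) = ⊤ := by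
  rw [eq_top_iff, ← (Finsupp.basisSingleOne (R := F) (ι := ℤ ⊕ ℕ)).span_eq]
  apply Submodule.span_mono
  rintro _ ⟨i | j, rfl⟩
  · exact .inl ⟨i, by simp [hwa]⟩
  · exact .inr ⟨j + 1, by simp, by simp [hws]⟩

theorem highwater_miyamoto_group (h2 : ringChar F ≠ 2)
    (tau : ℤ → (HW F ≃ₗ[F] HW F))
    (hta : ∀ i j : ℤ, tau i (hwa F j) = hwa F (2 * i - j))
    (hts : ∀ (i : ℤ) (j : ℕ), 1 ≤ j → tau i (hws F j) = hws F j)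
    (htm : ∀ (i : ℤ) (x y : HW F), tau i (hwMul F x y) = hwMul F (tau i x) (tau i y)) :
    (∀ j : ℤ, (tau 0 * tau 1) (hwa F j) = hwa F (j - 2)) ∧
    ¬ IsOfFinOrder (tau 0 * tau 1) ∧
    Subgroup.closure (Set.range tau) = Subgroup.closure {tau 0, tau 1} ∧
    Nonempty (↥(Subgroup.closure (Set.range tau)) ≃* DihedralGroup 0) := by
  exact highwater_miyamoto_group_general (hwa_injective F) (span_range_hwa_union_image_hws F) hta
    fun i => Set.forall_mem_image.mpr (hts i)
end

section
/- Let F be a field with char F ∉ {2, 3} and let H be the Highwater algebra over F. Then H is 2-generated: the smallest subalgebra of H containing a_0 and a_1 is H itself. -/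
variable (F : Type*) [Field F]

/-! If a subalgebra contains `a_i` and `a_j`, then it contains `s_{|i-j|}` by the product
`a_i · a_j`, and then `a_{2i-j}` by the product `a_i · s_{|i-j|}`, in which `a_j + a_{2i-j}` has
the coefficient `3/8 ≠ 0`. So the indices of its axes are closed under reflecting one in another,
and such reflections reach every integer from `0` and `1`. -/

theorem hwMul_single_single_s10 (b c : ℤ ⊕ ℕ) (x y : F) :
    hwMul F (Finsupp.single b x) (Finsupp.single c y) = (x * y) • hwBM F b c := by
  simp [hwMul]

theorem hwMul_hwa_hwa (i j : ℤ) :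
    hwMul F (hwa F i) (hwa F j) =
      ((1 : F) / 2) • (hwa F i + hwa F j) + hws F (i - j).natAbs := by
  simp only [hwa, hwMul_single_single_s10, hwBM, mul_one, one_smul]

theorem hwMul_hwa_hws_succ (i : ℤ) (j : ℕ) :
    hwMul F (hwa F i) (hws F (j + 1)) =
      (-(3 : F) / 4) • hwa F i
        + ((3 : F) / 8) • (hwa F (i - (j + 1 : ℕ)) + hwa F (i + (j + 1 : ℕ)))
        + ((3 : F) / 2) • hws F (j + 1) := by
  simp only [hwa, hws, hwMul_single_single_s10, hwBM, mul_one, one_smul, Nat.cast_add, Nat.cast_one]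

theorem forall_int_of_pointReflection {p : ℤ → Prop}
    (hp : ∀ i j, p i → p j → p (2 * i - j)) (h0 : p 0) (h1 : p 1) (i : ℤ) : p i := by
  suffices p i ∧ p (i + 1) from this.1
  induction i with
  | zero => exact ⟨h0, h1⟩
  | succ n ih =>
    refine ⟨ih.2, ?_⟩
    convert hp _ _ ih.2 ih.1 using 1
    ring
  | pred n ih =>
    refine ⟨?_, by simpa only [sub_add_cancel] using ih.1⟩
    convert hp _ _ ih.1 ih.2 using 1
    ring

section Submodule

variable {F} {W : Submodule F (HW F)}

theorem hws_natAbs_sub_mem (hW : ∀ x ∈ W, ∀ y ∈ W, hwMul F x y ∈ W)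
    {i j : ℤ} (hi : hwa F i ∈ W) (hj : hwa F j ∈ W) : hws F (i - j).natAbs ∈ W := by
  have hmul := hW _ hi _ hj
  rw [hwMul_hwa_hwa] at hmul
  exact (W.add_mem_iff_right (W.smul_mem _ (W.add_mem hi hj))).1 hmul

theorem hwa_sub_add_hwa_add_mem (hW : ∀ x ∈ W, ∀ y ∈ W, hwMul F x y ∈ W)
    (h2 : (2 : F) ≠ 0) (h3 : (3 : F) ≠ 0) {i : ℤ} {j : ℕ} (hi : hwa F i ∈ W) (hj : hws F j ∈ W) :
    hwa F (i - j) + hwa F (i + j) ∈ W := by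
  cases j with
  | zero => simpa only [Nat.cast_zero, sub_zero, add_zero] using W.add_mem hi hi
  | succ j =>
    have hmul := hW _ hi _ hj
    rw [hwMul_hwa_hws_succ, W.add_mem_iff_left (W.smul_mem _ hj),
      W.add_mem_iff_right (W.smul_mem _ hi)] at hmul
    have h8 : (8 : F) ≠ 0 := by
      rw [show (8 : F) = 2 ^ 3 by norm_num]
      exact pow_ne_zero 3 h2
    exact (W.smul_mem_iff (div_ne_zero h3 h8)).1 hmul

theorem hwa_two_mul_sub_mem (hW : ∀ x ∈ W, ∀ y ∈ W, hwMul F x y ∈ W)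
    (h2 : (2 : F) ≠ 0) (h3 : (3 : F) ≠ 0) {i j : ℤ} (hi : hwa F i ∈ W) (hj : hwa F j ∈ W) :
    hwa F (2 * i - j) ∈ W := by
  have hpair := hwa_sub_add_hwa_add_mem hW h2 h3 hi (hws_natAbs_sub_mem hW hi hj)
  have hsum : hwa F j + hwa F (2 * i - j) ∈ W := by
    obtain ⟨hsub, hadd⟩ | ⟨hsub, hadd⟩ :
        (i - (i - j).natAbs = j ∧ i + (i - j).natAbs = 2 * i - j) ∨
          (i - (i - j).natAbs = 2 * i - j ∧ i + (i - j).natAbs = j) := by omega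
    · rwa [hsub, hadd] at hpair
    · rwa [hsub, hadd, add_comm] at hpair
  exact (W.add_mem_iff_right hj).1 hsum

theorem eq_top_of_hwa_mem_of_hws_mem (ha : ∀ i, hwa F i ∈ W) (hs : ∀ j, hws F j ∈ W) :
    W = ⊤ := by
  rw [eq_top_iff, ← Finsupp.basisSingleOne.span_eq, Submodule.span_le, Set.range_subset_iff,
    Finsupp.coe_basisSingleOne]
  rintro (i | j)
  · exact ha i
  · exact hs (j + 1)

end Submodule

theorem highwater_two_generated (h2 : ringChar F ≠ 2) (h3 : ringChar F ≠ 3) :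
    ∀ W : Submodule F (HW F), (∀ x ∈ W, ∀ y ∈ W, hwMul F x y ∈ W) →
      hwa F 0 ∈ W → hwa F 1 ∈ W → W = ⊤ := by
  intro W hW h0 h1
  have hthree : (3 : F) ≠ 0 := CharP.cast_ne_zero_of_ne_of_prime F Nat.prime_three h3
  have ha : ∀ i, hwa F i ∈ W := forall_int_of_pointReflection
    (fun _ _ => hwa_two_mul_sub_mem hW (Ring.two_ne_zero h2) hthree) h0 h1
  have hs (j : ℕ) : hws F j ∈ W := by
    simpa only [sub_zero, Int.natAbs_natCast] using hws_natAbs_sub_mem hW (ha j) (ha 0)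
  exact eq_top_of_hwa_mem_of_hws_mem ha hs
end

section
/- Let F be a field with char F = 3 and let H be the Highwater algebra over F. Then H is not finitely generated: for every finite subset S of H, the smallest subalgebra of H containing S is a proper subalgebra of H. -/
variable (F : Type*) [Field F]

/-! In characteristic 3 every coefficient of `a_i · s_j` and of `s_j · s_k` vanishes, so the only
nonzero products of basis elements are `a_i · a_k = (1/2)(a_i + a_k) + s_{|i - k|}`. Hence no
product creates a new axis: finitely many axes, together with the `s_j` indexed by their mutual
distances and any finitely many further `s_j`, span a subalgebra. Every finite set therefore lies in
a finite-dimensional subalgebra, which is proper because the algebra has infinite dimension. -/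

section

variable {F}

theorem hwMul_mem_of_hwBM_mem {A B : Set (ℤ ⊕ ℕ)} {W : Submodule F (HW F)}
    (h : ∀ b ∈ A, ∀ c ∈ B, hwBM F b c ∈ W) {x y : HW F}
    (hx : x ∈ Finsupp.supported F F A) (hy : y ∈ Finsupp.supported F F B) :
    hwMul F x y ∈ W :=
  Submodule.sum_mem _ fun b hb => Submodule.sum_mem _ fun c hc =>
    W.smul_mem _ (h b (hx hb) c (hy hc))

theorem hws_mem_supported {B : Set (ℤ ⊕ ℕ)} {n : ℕ} (h : Sum.inr (n - 1) ∈ B) :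
    hws F n ∈ Finsupp.supported F F B := by
  cases n with
  | zero => exact zero_mem _
  | succ j => exact Finsupp.single_mem_supported F 1 h

theorem hwBM_inr_right_eq_zero [CharP F 3] (b : ℤ ⊕ ℕ) (j : ℕ) : hwBM F b (Sum.inr j) = 0 := by
  have three_eq_zero : (3 : F) = 0 := CharP.ofNat_eq_zero F 3
  cases b <;> simp [hwBM, three_eq_zero]

theorem hwBM_inr_left_eq_zero [CharP F 3] (j : ℕ) (b : ℤ ⊕ ℕ) : hwBM F (Sum.inr j) b = 0 := by
  have three_eq_zero : (3 : F) = 0 := CharP.ofNat_eq_zero F 3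
  cases b <;> simp [hwBM, three_eq_zero]

/-- The closure of a set `B` of basis indices under distances of axes: `B` together with the index
of `s_{|i - k|}` for all axes `a_i`, `a_k` indexed by `B`. For `i = k`, where `s_0 = 0` has no
index, truncated subtraction adds the index of `s_1` instead, which is harmless. -/
def hwDistClosure (B : Set (ℤ ⊕ ℕ)) : Set (ℤ ⊕ ℕ) :=
  B ∪ Set.image2 (fun i k => Sum.inr ((i - k).natAbs - 1)) (Sum.inl ⁻¹' B) (Sum.inl ⁻¹' B)

theorem subset_hwDistClosure (B : Set (ℤ ⊕ ℕ)) : B ⊆ hwDistClosure B :=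
  Set.subset_union_left

theorem inl_mem_hwDistClosure {B : Set (ℤ ⊕ ℕ)} {i : ℤ} :
    Sum.inl i ∈ hwDistClosure B ↔ Sum.inl i ∈ B := by
  simp [hwDistClosure]

theorem inr_natAbs_sub_mem_hwDistClosure {B : Set (ℤ ⊕ ℕ)} {i k : ℤ}
    (hi : Sum.inl i ∈ B) (hk : Sum.inl k ∈ B) :
    Sum.inr ((i - k).natAbs - 1) ∈ hwDistClosure B :=
  Or.inr (Set.mem_image2_of_mem hi hk)

theorem finite_hwDistClosure {B : Set (ℤ ⊕ ℕ)} (hB : B.Finite) : (hwDistClosure B).Finite :=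
  have axes_finite : (Sum.inl ⁻¹' B : Set ℤ).Finite := hB.preimage Sum.inl_injective.injOn
  hB.union (axes_finite.image2 _ axes_finite)

theorem hwBM_mem_supported_hwDistClosure [CharP F 3] {B : Set (ℤ ⊕ ℕ)} {b c : ℤ ⊕ ℕ}
    (hb : b ∈ hwDistClosure B) (hc : c ∈ hwDistClosure B) :
    hwBM F b c ∈ Finsupp.supported F F (hwDistClosure B) := by
  rcases b with i | j
  · rcases c with k | l
    · have hai : hwa F i ∈ Finsupp.supported F F (hwDistClosure B) :=
        Finsupp.single_mem_supported F 1 hb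
      have hak : hwa F k ∈ Finsupp.supported F F (hwDistClosure B) :=
        Finsupp.single_mem_supported F 1 hc
      have hs : hws F (i - k).natAbs ∈ Finsupp.supported F F (hwDistClosure B) :=
        hws_mem_supported (inr_natAbs_sub_mem_hwDistClosure
          (inl_mem_hwDistClosure.mp hb) (inl_mem_hwDistClosure.mp hc))
      exact add_mem (Submodule.smul_mem _ _ (add_mem hai hak)) hs
    · simp only [hwBM_inr_right_eq_zero, zero_mem]
  · simp only [hwBM_inr_left_eq_zero, zero_mem]

theorem exists_finiteDimensional_hwMul_closed_of_finite [CharP F 3] {S : Set (HW F)}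
    (hS : S.Finite) :
    ∃ W : Submodule F (HW F), FiniteDimensional F W ∧
      (∀ x ∈ W, ∀ y ∈ W, hwMul F x y ∈ W) ∧ S ⊆ W := by
  let B : Set (ℤ ⊕ ℕ) := ⋃ x ∈ S, (x.support : Set (ℤ ⊕ ℕ))
  have hB : B.Finite := hS.biUnion fun x _ => x.support.finite_toSet
  have : Finite (hwDistClosure B) := (finite_hwDistClosure hB).to_subtype
  refine ⟨Finsupp.supported F F (hwDistClosure B), ?_, ?_, ?_⟩
  · exact Module.Finite.equiv (Finsupp.supportedEquivFinsupp (hwDistClosure B)).symm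
  · exact fun x hx y hy =>
      hwMul_mem_of_hwBM_mem (fun _ hb _ hc => hwBM_mem_supported_hwDistClosure hb hc) hx hy
  · exact fun x hx => (Set.subset_biUnion_of_mem hx).trans (subset_hwDistClosure B)

end

theorem not_finiteDimensional_hw : ¬ FiniteDimensional F (HW F) :=
  Module.not_finite_of_infinite_basis Finsupp.basisSingleOne

theorem highwater_not_finitely_generated_char3 (h3 : ringChar F = 3) :
    ∀ S : Set (HW F), S.Finite →
      ∃ W : Submodule F (HW F), (∀ x ∈ W, ∀ y ∈ W, hwMul F x y ∈ W) ∧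
        S ⊆ W ∧ W ≠ ⊤ := by
  have : CharP F 3 := ringChar.of_eq h3
  intro S hS
  obtain ⟨W, _, hmul, hSW⟩ := exists_finiteDimensional_hwMul_closed_of_finite hS
  refine ⟨W, hmul, hSW, ?_⟩
  rintro rfl
  exact not_finiteDimensional_hw F (Module.Finite.equiv Submodule.topEquiv)
end
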